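/- arXiv:2508.02615 — 2 statements merged into one kernel-verified Lean document; each statement's English description precedes it below -/
import Mathlib

section
/- Let (E,d_E) be a separable metric space, let p ≥ 1 and let μ ∈ 𝒫_p(E). Let J = {2^k : k ∈ ℕ ∪ {0}}. Suppose that (μ^{(n)})_{n∈J} is a sequence of probability measures on E such that each μ^{(n)} has the form (1/n)∑_{i=1}^n δ_{x_i} for some x₁,…,x_n ∈ E. If W_p(μ^{(2n)}, μ) ≥ 2^{−1/(2p)} · W_p(μ^{(n)}, μ) for all n ∈ J, then W_p(μ^{(n)}, μ) ≥ (1/(5(1 + log₂ n))) · 𝔼[W_p(μ_n, μ)] for all n ∈ J, where μ_n is the empirical measure of μ with sample size n. -/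
open MeasureTheory ENNReal Filter

noncomputable section

/-- The `p`-Wasserstein distance between two measures on a metric space, as an
extended nonnegative real: the infimum over all couplings `γ` (measures on `E × E`
with the prescribed marginals) of `(∫ d(x,y)^p dγ)^(1/p)`. -/
def Wp {E : Type*} [MetricSpace E] [MeasurableSpace E] (p : ℝ) (μ ν : Measure E) : ℝ≥0∞ :=
  ⨅ γ ∈ {γ : Measure (E × E) | γ.map Prod.fst = μ ∧ γ.map Prod.snd = ν},
    (∫⁻ z, edist z.1 z.2 ^ p ∂γ) ^ (1 / p)

/-- The (uniform) discrete measure `(1/n) ∑ δ_{X i}`. -/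
def empiricalMeasure {E : Type*} [MeasurableSpace E] (n : ℕ) (X : Fin n → E) : Measure E :=
  (n : ℝ≥0∞)⁻¹ • ∑ i, Measure.dirac (X i)

/-- The law of `n` independent samples of `μ`. -/
def sampleMeasure {E : Type*} [MeasurableSpace E] (μ : Measure E) (n : ℕ) :
    Measure (Fin n → E) :=
  Measure.pi fun _ => μ

/-- `𝔼[W_p(μ_n, μ)]`, where `μ_n` is the empirical measure of `μ` with sample size `n`. -/
def expWp {E : Type*} [MetricSpace E] [MeasurableSpace E] (p : ℝ) (μ : Measure E) (n : ℕ) :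
    ℝ≥0∞ :=
  ∫⁻ X, Wp p (empiricalMeasure n X) μ ∂(sampleMeasure μ n)

/-- `(𝔼[W_p(μ_n, μ)^p])^{1/p}`, where `μ_n` is the empirical measure of `μ` with
sample size `n`. -/
def expWpPow {E : Type*} [MetricSpace E] [MeasurableSpace E] (p : ℝ) (μ : Measure E) (n : ℕ) :
    ℝ≥0∞ :=
  (∫⁻ X, (Wp p (empiricalMeasure n X) μ) ^ p ∂(sampleMeasure μ n)) ^ (1 / p)

/-- The optimal uniform quantization error
`b_{n,p}(μ) = inf_{x₁,…,x_n} W_p(μ, (1/n) ∑ δ_{x_i})`. -/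
def unifQuantErr {E : Type*} [MetricSpace E] [MeasurableSpace E] (p : ℝ) (n : ℕ)
    (μ : Measure E) : ℝ≥0∞ :=
  ⨅ x : Fin n → E, Wp p μ (empiricalMeasure n x)

/-- The optimal quantization error `e_{n,p}(μ)`: the infimum of `W_p(μ, ν)` over all
probability measures `ν` supported on at most `n` points. -/
def quantErr {E : Type*} [MetricSpace E] [MeasurableSpace E] (p : ℝ) (n : ℕ)
    (μ : Measure E) : ℝ≥0∞ :=
  ⨅ ν ∈ {ν : Measure E | IsProbabilityMeasure ν ∧
      ∃ S : Finset E, S.card ≤ n ∧ ν (↑S : Set E)ᶜ = 0}, Wp p μ ν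

/-- `μ` has a finite `p`-th moment: `∫ d(x, x₀)^p dμ(x) < ∞` for some `x₀`. -/
def HasFiniteMoment {E : Type*} [MetricSpace E] [MeasurableSpace E] (p : ℝ)
    (μ : Measure E) : Prop :=
  ∃ x₀ : E, ∫⁻ x, edist x x₀ ^ p ∂μ ≠ ∞

end

/-!
To bound `𝔼[W_p(μ_n, μ)]` for `n = 2 ^ k`, round the samples by a nearly optimal transport kernel
from `μ` to `ν k`. Unbiasedness of `μ_n` and Jensen's inequality bound the cost of rounding by
`W_p(μ, ν k)`, so it remains to move the rounded empirical measure onto `ν k`. Their common part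
stays in place; the excess and the deficit are rounded further, to `ν (k - 1)`, ..., `ν 0`, where
nothing is left because `ν 0` is a Dirac mass. At level `j`, an atom `y` of mass `a ≥ 2 ^ (-j)`
has expected fluctuation at most `(a / n) ^ (1 / 2) ≤ (2 ^ j / n) ^ (1 / 2) * a`, so excess and
deficit cost at most `(2 ^ j / n) ^ (1 / (2 * p))` times the distance from `ν j` to `ν (j - 1)`.
Under the decay hypothesis these products are all at most a multiple of `W_p(ν k, μ)`.
-/

open ProbabilityTheory Measure

namespace UniformQuantization

section Disintegration

variable {α E : Type*} [MeasurableSpace α] [MeasurableSpace E]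

-- `E` need not be standard Borel, so the disintegration is taken over a countable subtype.
lemma exists_compProd_eq_of_countable [MeasurableSingletonClass E] [Nonempty E]
    (γ : Measure (α × E)) [IsFiniteMeasure γ] {S : Set E} (hS : S.Countable)
    (hγ : ∀ᵐ z ∂γ, z.2 ∈ S) :
    ∃ κ : Kernel α E, IsMarkovKernel κ ∧ γ.map Prod.fst ⊗ₘ κ = γ := by
  let y₀ : E := Classical.arbitrary E
  let T : Set E := insert y₀ S
  have hT : T.Countable := hS.insert y₀
  have : Countable T := hT.to_subtype
  have : Nonempty T := ⟨⟨y₀, Set.mem_insert y₀ S⟩⟩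
  have hcoe : MeasurableEmbedding ((↑) : T → E) := .subtype_coe hT.measurableSet
  let r : E → T := hcoe.invFun
  have hr : Measurable r := hcoe.measurable_invFun
  have hretract : ∀ᵐ z ∂γ, (z.1, ((r z.2 : T) : E)) = z := by
    filter_upwards [hγ] with z hz
    have : r z.2 = ⟨z.2, Set.mem_insert_of_mem y₀ hz⟩ := hcoe.leftInverse_invFun ⟨z.2, _⟩
    rw [this]
  refine ⟨(condDistrib (r ∘ Prod.snd) Prod.fst γ).map (↑),
    Kernel.IsMarkovKernel.map _ hcoe.measurable, ?_⟩
  rw [Measure.compProd_map hcoe.measurable,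
    compProd_map_condDistrib (hr.comp measurable_snd).aemeasurable,
    Measure.map_map (measurable_id.prodMap hcoe.measurable) (by fun_prop)]
  exact (Measure.map_congr hretract).trans Measure.map_id

lemma map_compProd_comap {Ω : Type*} [MeasurableSpace Ω] (γ : Measure Ω) [SFinite γ]
    (κ : Kernel α E) [IsSFiniteKernel κ] {f : Ω → α} (hf : Measurable f) :
    (γ ⊗ₘ κ.comap f hf).map (Prod.map f id) = γ.map f ⊗ₘ κ := by
  ext s hs
  have hfs : Measurable (Prod.map f (id : E → E)) := hf.prodMap measurable_id
  rw [Measure.map_apply hfs hs, compProd_apply (hfs hs), compProd_apply hs,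
    lintegral_map (Kernel.measurable_kernel_prodMk_left hs) hf]
  rfl

end Disintegration

section Wasserstein

variable {E : Type*} [MetricSpace E] [MeasurableSpace E] {p : ℝ}

lemma Wp_le_of_coupling {α β : Measure E} (γ : Measure (E × E))
    (hfst : γ.map Prod.fst = α) (hsnd : γ.map Prod.snd = β) :
    Wp p α β ≤ (∫⁻ z, edist z.1 z.2 ^ p ∂γ) ^ (1 / p) :=
  iInf₂_le γ ⟨hfst, hsnd⟩

lemma exists_coupling_of_Wp_lt {α β : Measure E} {c : ℝ≥0∞} (h : Wp p α β < c) :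
    ∃ γ : Measure (E × E), γ.map Prod.fst = α ∧ γ.map Prod.snd = β ∧
      (∫⁻ z, edist z.1 z.2 ^ p ∂γ) ^ (1 / p) < c := by
  obtain ⟨γ, ⟨hfst, hsnd⟩, hγ⟩ := by simpa only [Wp, iInf_lt_iff] using h
  exact ⟨γ, hfst, hsnd, hγ⟩

variable [TopologicalSpace.SeparableSpace E] [BorelSpace E]

@[fun_prop]
lemma measurable_edist_rpow (p : ℝ) : Measurable fun z : E × E => edist z.1 z.2 ^ p := by
  have : SecondCountableTopology E := UniformSpace.secondCountable_of_separable E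
  exact measurable_edist.pow_const p

lemma Wp_comm (p : ℝ) (α β : Measure E) : Wp p α β = Wp p β α := by
  suffices h : ∀ α β : Measure E, Wp p α β ≤ Wp p β α from le_antisymm (h α β) (h β α)
  refine fun α β => le_of_forall_gt fun c hc => ?_
  obtain ⟨γ, hfst, hsnd, hγ⟩ := exists_coupling_of_Wp_lt hc
  refine (Wp_le_of_coupling (γ.map Prod.swap) ?_ ?_).trans_lt (hγ.trans_eq' ?_)
  · rwa [Measure.map_map measurable_fst measurable_swap]
  · rwa [Measure.map_map measurable_snd measurable_swap]
  · rw [lintegral_map (measurable_edist_rpow p) measurable_swap]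
    simp [edist_comm]

lemma Wp_add_left_le (hp : 0 < p) (m α β : Measure E) : Wp p (m + α) (m + β) ≤ Wp p α β := by
  refine le_of_forall_gt fun c hc => ?_
  obtain ⟨γ, hfst, hsnd, hγ⟩ := exists_coupling_of_Wp_lt hc
  have hdiag : Measurable fun x : E => (x, x) := by fun_prop
  refine (Wp_le_of_coupling (m.map (fun x => (x, x)) + γ) ?_ ?_).trans_lt (hγ.trans_eq' ?_)
  · rw [Measure.map_add _ _ measurable_fst, Measure.map_map measurable_fst hdiag, hfst]
    exact congrArg (· + α) Measure.map_id
  · rw [Measure.map_add _ _ measurable_snd, Measure.map_map measurable_snd hdiag, hsnd]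
    exact congrArg (· + β) Measure.map_id
  · rw [lintegral_add_measure, lintegral_map (measurable_edist_rpow p) hdiag]
    simp [hp]

lemma Wp_le_add_of_gluing (hp : 1 ≤ p) (τ : Measure ((E × E) × E)) :
    Wp p (τ.map fun z => z.1.1) (τ.map fun z => z.2) ≤
      (∫⁻ z, edist z.1.1 z.1.2 ^ p ∂τ) ^ (1 / p) + (∫⁻ z, edist z.1.2 z.2 ^ p ∂τ) ^ (1 / p) := by
  have : SecondCountableTopology E := UniformSpace.secondCountable_of_separable E
  have hpair : Measurable fun z : (E × E) × E => (z.1.1, z.2) := by fun_prop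
  calc Wp p (τ.map fun z => z.1.1) (τ.map fun z => z.2)
      ≤ (∫⁻ z, edist z.1 z.2 ^ p ∂τ.map fun z => (z.1.1, z.2)) ^ (1 / p) :=
        Wp_le_of_coupling _ (Measure.map_map measurable_fst hpair)
          (Measure.map_map measurable_snd hpair)
    _ = (∫⁻ z, edist z.1.1 z.2 ^ p ∂τ) ^ (1 / p) := by
        rw [lintegral_map (measurable_edist_rpow p) hpair]
    _ ≤ (∫⁻ z, (edist z.1.1 z.1.2 + edist z.1.2 z.2) ^ p ∂τ) ^ (1 / p) := by
        gcongr
        exact edist_triangle _ _ _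
    _ ≤ _ := ENNReal.lintegral_Lp_add_le (by fun_prop) (by fun_prop) hp

lemma Wp_triangle (hp : 1 ≤ p) (α β : Measure E) {δ : Measure E} [IsFiniteMeasure δ]
    {S : Set E} (hS : S.Countable) (hδ : ∀ᵐ y ∂δ, y ∈ S) :
    Wp p α δ ≤ Wp p α β + Wp p β δ := by
  rcases isEmpty_or_nonempty E with hE | hE
  · simp [Measure.eq_zero_of_isEmpty α, Measure.eq_zero_of_isEmpty β]
  refine le_of_forall_gt fun c hc => ?_
  obtain ⟨c₁, hc₁, c₂, hc₂, hc₁₂⟩ := ENNReal.exists_add_lt_of_add_lt hc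
  obtain ⟨γ₁, hfst₁, hsnd₁, hγ₁⟩ := exists_coupling_of_Wp_lt hc₁
  obtain ⟨γ₂, hfst₂, hsnd₂, hγ₂⟩ := exists_coupling_of_Wp_lt hc₂
  have : IsFiniteMeasure (γ₂.map Prod.snd) := by rwa [hsnd₂]
  have : IsFiniteMeasure γ₂ := isFiniteMeasure_of_map measurable_snd.aemeasurable
  have : IsFiniteMeasure (γ₁.map Prod.snd) := by rw [hsnd₁, ← hfst₂]; infer_instance
  have : IsFiniteMeasure γ₁ := isFiniteMeasure_of_map measurable_snd.aemeasurable
  obtain ⟨κ, _, hκ⟩ := exists_compProd_eq_of_countable γ₂ hS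
    (ae_of_ae_map measurable_snd.aemeasurable (hsnd₂ ▸ hδ))
  let τ : Measure ((E × E) × E) := γ₁ ⊗ₘ κ.comap Prod.snd measurable_snd
  have hτ₁ : τ.map Prod.fst = γ₁ := fst_compProd γ₁ _
  have hτ₂ : τ.map (Prod.map Prod.snd id) = γ₂ := by
    rw [map_compProd_comap, hsnd₁, ← hfst₂, hκ]
  have hα : τ.map (fun z => z.1.1) = α := by
    rw [← hfst₁, ← hτ₁, Measure.map_map measurable_fst measurable_fst]; rfl
  have hδ' : τ.map (fun z => z.2) = δ := by
    rw [← hsnd₂, ← hτ₂, Measure.map_map measurable_snd (by fun_prop)]; rfl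
  rw [← hτ₁, lintegral_map (measurable_edist_rpow p) measurable_fst] at hγ₁
  rw [← hτ₂, lintegral_map (measurable_edist_rpow p) (by fun_prop)] at hγ₂
  rw [← hα, ← hδ']
  exact ((Wp_le_add_of_gluing hp τ).trans (add_le_add hγ₁.le hγ₂.le)).trans_lt hc₁₂

/-- The expected `p`-cost of transporting a unit mass from `x` according to the kernel `κ`. -/
noncomputable def kernelCost (p : ℝ) (κ : Kernel E E) (x : E) : ℝ≥0∞ := ∫⁻ y, edist x y ^ p ∂κ x

lemma measurable_kernelCost (p : ℝ) (κ : Kernel E E) [IsSFiniteKernel κ] :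
    Measurable (kernelCost p κ) :=
  (measurable_edist_rpow p).lintegral_kernel_prod_right'

lemma lintegral_compProd_edist_rpow (p : ℝ) (α : Measure E) [SFinite α] (κ : Kernel E E)
    [IsSFiniteKernel κ] :
    ∫⁻ z, edist z.1 z.2 ^ p ∂(α ⊗ₘ κ) = ∫⁻ x, kernelCost p κ x ∂α :=
  lintegral_compProd (measurable_edist_rpow p)

lemma Wp_comp_le (p : ℝ) (α : Measure E) [SFinite α] (κ : Kernel E E) [IsMarkovKernel κ] :
    Wp p α (κ ∘ₘ α) ≤ (∫⁻ x, kernelCost p κ x ∂α) ^ (1 / p) := by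
  rw [← lintegral_compProd_edist_rpow]
  exact Wp_le_of_coupling (α ⊗ₘ κ) (fst_compProd α κ) (snd_compProd α κ)

lemma exists_kernel_of_Wp_lt {α β : Measure E} [IsProbabilityMeasure β] {S : Set E}
    (hS : S.Countable) (hβ : ∀ᵐ y ∂β, y ∈ S) {c : ℝ≥0∞} (h : Wp p α β < c) :
    ∃ κ : Kernel E E, IsMarkovKernel κ ∧ κ ∘ₘ α = β ∧
      (∫⁻ x, kernelCost p κ x ∂α) ^ (1 / p) < c := by
  obtain ⟨γ, hfst, hsnd, hγ⟩ := exists_coupling_of_Wp_lt h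
  have := nonempty_of_isProbabilityMeasure β
  have : IsFiniteMeasure (γ.map Prod.snd) := by rw [hsnd]; infer_instance
  have : IsFiniteMeasure γ := isFiniteMeasure_of_map measurable_snd.aemeasurable
  obtain ⟨κ, hκ, hκγ⟩ := exists_compProd_eq_of_countable γ hS
    (ae_of_ae_map measurable_snd.aemeasurable (hsnd ▸ hβ))
  rw [hfst] at hκγ
  have : IsFiniteMeasure α := hfst ▸ inferInstance
  refine ⟨κ, hκ, ?_, ?_⟩
  · rw [← snd_compProd, hκγ, ← hsnd, Measure.snd]
  · rwa [← lintegral_compProd_edist_rpow, hκγ]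

end Wasserstein

section MeasureSub

variable {Ω : Type*} [MeasurableSpace Ω]

lemma add_sub_add_left (m α β : Measure Ω) [IsFiniteMeasure m] :
    (m + α) - (m + β) = α - β := by
  have hset : {d : Measure Ω | m + α ≤ d + (m + β)} = {d | α ≤ d + β} := by
    ext d
    simp only [Set.mem_ofPred_eq, Measure.le_iff', Measure.add_apply, add_left_comm (d _)]
    exact forall_congr' fun s => ENNReal.add_le_add_iff_left (measure_ne_top m s)
  rw [Measure.sub_def, Measure.sub_def, hset]

lemma add_sub_comm_of_isFiniteMeasure (α β : Measure Ω) [IsFiniteMeasure α] [IsFiniteMeasure β] :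
    α + (β - α) = β + (α - β) := by
  have h := sub_toSignedMeasure_eq_toSignedMeasure_sub (μ := α) (ν := β)
  rw [sub_eq_sub_iff_add_eq_add, ← toSignedMeasure_add, ← toSignedMeasure_add,
    toSignedMeasure_eq_toSignedMeasure_iff] at h
  rw [h, add_comm]

lemma exists_common_part (α β : Measure Ω) [IsFiniteMeasure α] [IsFiniteMeasure β] :
    ∃ m : Measure Ω, IsFiniteMeasure m ∧ α = m + (α - β) ∧ β = m + (β - α) := by
  have hα : α - (α - β) + (α - β) = α := sub_add_cancel_of_le Measure.sub_le
  refine ⟨α - (α - β), inferInstance, hα.symm, ?_⟩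
  ext s -
  refine (ENNReal.add_left_inj (measure_ne_top (α - β) s)).1 ?_
  have h := congrArg (· s) (add_sub_comm_of_isFiniteMeasure α β)
  have hαs := congrArg (· s) hα
  simp only [Measure.add_apply] at h hαs ⊢
  rw [← h, add_right_comm, hαs]

lemma comp_sub_comp {Ω' : Type*} [MeasurableSpace Ω'] (κ : Kernel Ω Ω') [IsFiniteKernel κ]
    (α β : Measure Ω) [IsFiniteMeasure α] [IsFiniteMeasure β] :
    κ ∘ₘ (α - β) - κ ∘ₘ (β - α) = κ ∘ₘ α - κ ∘ₘ β := by
  obtain ⟨m, _, hα, hβ⟩ := exists_common_part α β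
  calc κ ∘ₘ (α - β) - κ ∘ₘ (β - α)
      = κ ∘ₘ (m + (α - β)) - κ ∘ₘ (m + (β - α)) := by
        rw [Measure.comp_add, Measure.comp_add, add_sub_add_left]
    _ = κ ∘ₘ α - κ ∘ₘ β := by rw [← hα, ← hβ]

lemma measureReal_comp {Ω' : Type*} [MeasurableSpace Ω'] (κ : Kernel Ω Ω') [IsFiniteKernel κ]
    (α : Measure Ω) {s : Set Ω'} (hs : MeasurableSet s) :
    (κ ∘ₘ α).real s = ∫ ω, (κ ω).real s ∂α := by
  rw [Measure.real, Measure.bind_apply hs κ.aemeasurable]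
  exact (integral_toReal (κ.measurable_coe hs).aemeasurable
    (ae_of_all _ fun ω => measure_lt_top _ _)).symm

lemma measure_sub_le_enorm_sub (α β : Measure Ω) [IsFiniteMeasure α] [IsFiniteMeasure β]
    (s : Set Ω) : α s - β s ≤ ‖α.real s - β.real s‖ₑ := by
  rw [← ofReal_measureReal, ← ofReal_measureReal, ← ENNReal.ofReal_sub _ measureReal_nonneg,
    Real.enorm_eq_ofReal_abs]
  exact ENNReal.ofReal_le_ofReal (le_abs_self _)

variable [MeasurableSingletonClass Ω]

lemma sub_apply_singleton_le (α β : Measure Ω) (y : Ω) : (α - β) {y} ≤ α {y} - β {y} := by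
  have hy : MeasurableSet {y} := measurableSet_singleton y
  have hle : α.restrict {y} - β.restrict {y} ≤ (α {y} - β {y}) • dirac y := by
    refine Measure.sub_le_of_le_add ?_
    rw [Measure.restrict_singleton, Measure.restrict_singleton, ← add_smul]
    gcongr
    exact le_tsub_add
  calc (α - β) {y} = (α.restrict {y} - β.restrict {y}) {y} := by
        rw [← restrict_sub_eq_restrict_sub_restrict hy, Measure.restrict_apply_self]
    _ ≤ ((α {y} - β {y}) • dirac y) {y} := hle _
    _ = α {y} - β {y} := by simp

lemma lintegral_sub_le_tsum (α β : Measure Ω) [IsFiniteMeasure α] [IsFiniteMeasure β] {S : Set Ω}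
    (hS : S.Countable) (hα : ∀ᵐ y ∂α, y ∈ S) (f : Ω → ℝ≥0∞) :
    ∫⁻ y, f y ∂(α - β) ≤ ∑' y : S, ‖α.real {(y : Ω)} - β.real {(y : Ω)}‖ₑ * f y := by
  have hrestrict : (α - β).restrict S = α - β :=
    Measure.restrict_eq_self_of_ae_mem (Measure.absolutelyContinuous_of_le Measure.sub_le hα)
  rw [← hrestrict, lintegral_countable f hS]
  refine ENNReal.tsum_le_tsum fun y => ?_
  rw [mul_comm]
  gcongr
  exact (sub_apply_singleton_le α β y).trans (measure_sub_le_enorm_sub α β _)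

end MeasureSub

section Cancellation

variable {E : Type*} [MetricSpace E] [TopologicalSpace.SeparableSpace E] [MeasurableSpace E]
  [BorelSpace E] {p : ℝ}

lemma Wp_le_Wp_sub (hp : 0 < p) (α β : Measure E) [IsFiniteMeasure α] [IsFiniteMeasure β] :
    Wp p α β ≤ Wp p (α - β) (β - α) := by
  obtain ⟨m, -, hα, hβ⟩ := exists_common_part α β
  calc Wp p α β = Wp p (m + (α - β)) (m + (β - α)) := by rw [← hα, ← hβ]
    _ ≤ Wp p (α - β) (β - α) := Wp_add_left_le hp m _ _

lemma Wp_sub_le_kernelCost_add (hp : 1 ≤ p) (κ : Kernel E E) [IsMarkovKernel κ] (α β : Measure E)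
    [IsFiniteMeasure α] [IsFiniteMeasure β] {S : Set E} (hS : S.Countable)
    (hβ : ∀ᵐ y ∂β, y ∈ S) :
    Wp p (α - β) (β - α) ≤ (∫⁻ x, kernelCost p κ x ∂(α - β)) ^ (1 / p) +
      (∫⁻ x, kernelCost p κ x ∂(β - α)) ^ (1 / p) +
      Wp p (κ ∘ₘ α - κ ∘ₘ β) (κ ∘ₘ β - κ ∘ₘ α) := by
  have hδ : ∀ᵐ y ∂(β - α), y ∈ S := Measure.absolutelyContinuous_of_le Measure.sub_le hβ
  calc Wp p (α - β) (β - α)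
      ≤ Wp p (α - β) (κ ∘ₘ (α - β)) + Wp p (κ ∘ₘ (α - β)) (β - α) := Wp_triangle hp _ _ hS hδ
    _ ≤ Wp p (α - β) (κ ∘ₘ (α - β)) +
          (Wp p (κ ∘ₘ (α - β)) (κ ∘ₘ (β - α)) + Wp p (κ ∘ₘ (β - α)) (β - α)) := by
        gcongr
        exact Wp_triangle hp _ _ hS hδ
    _ ≤ (∫⁻ x, kernelCost p κ x ∂(α - β)) ^ (1 / p) +
          (Wp p (κ ∘ₘ α - κ ∘ₘ β) (κ ∘ₘ β - κ ∘ₘ α) +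
            (∫⁻ x, kernelCost p κ x ∂(β - α)) ^ (1 / p)) := by
        rw [Wp_comm p (κ ∘ₘ (β - α)), ← comp_sub_comp, ← comp_sub_comp κ β]
        gcongr
        · exact Wp_comp_le p _ κ
        · exact Wp_le_Wp_sub (by linarith) _ _
        · exact Wp_comp_le p _ κ
    _ = _ := by rw [add_assoc, add_comm (Wp p _ _)]

end Cancellation

section ENNRealBounds

lemma le_mul_add_of_forall_gt {a b w W : ℝ≥0∞} (hw₀ : w ≠ 0) (hw : w ≠ ∞)
    (h : ∀ c > W, a ≤ w * c + b) : a ≤ w * W + b := by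
  rcases eq_or_ne W ∞ with rfl | hW
  · simp [hw₀]
  have : (nhdsWithin W (Set.Ioi W)).NeBot := nhdsGT_neBot_of_exists_gt ⟨∞, hW.lt_top⟩
  have hlim : Tendsto (fun c => w * c + b) (nhdsWithin W (Set.Ioi W)) (nhds (w * W + b)) :=
    ((ENNReal.Tendsto.const_mul tendsto_id (.inr hw)).add tendsto_const_nhds).mono_left
      nhdsWithin_le_nhds
  exact ge_of_tendsto hlim (eventually_mem_nhdsWithin.mono h)

lemma rpow_half_div_le_mul_of_inv_le {a b c : ℝ≥0∞} (ha : a ≠ ∞) (hc : c ≠ ∞) (h : c⁻¹ ≤ a) :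
    (a / b) ^ (1 / 2 : ℝ) ≤ (c / b) ^ (1 / 2 : ℝ) * a := by
  have hac : 1 ≤ c * a :=
    (ENNReal.inv_le_iff_le_mul (fun h => absurd h ha) (fun h => absurd h hc)).1 h
  have hle : a / b ≤ c / b * a ^ 2 := by
    calc a / b = 1 * a / b := by rw [one_mul]
      _ ≤ c * a * a / b := by gcongr
      _ = c / b * a ^ 2 := by simp only [div_eq_mul_inv]; ring
  calc (a / b) ^ (1 / 2 : ℝ) ≤ (c / b * a ^ 2) ^ (1 / 2 : ℝ) := by gcongr
    _ = (c / b) ^ (1 / 2 : ℝ) * a := by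
        rw [ENNReal.mul_rpow_of_nonneg _ _ (by norm_num), ← ENNReal.rpow_two, ← ENNReal.rpow_mul]
        norm_num

end ENNRealBounds

section Moments

variable {Ω : Type*} [MeasurableSpace Ω] {P : Measure Ω} [IsProbabilityMeasure P]

lemma lintegral_rpow_one_div_le {p : ℝ} (hp : 1 ≤ p) {f : Ω → ℝ≥0∞} (hf : AEMeasurable f P) :
    ∫⁻ ω, f ω ^ (1 / p) ∂P ≤ (∫⁻ ω, f ω ∂P) ^ (1 / p) := by
  have h := eLpNorm'_le_eLpNorm'_of_exponent_le (f := fun ω => f ω ^ (1 / p)) zero_lt_one hp P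
    (hf.pow_const _).aestronglyMeasurable
  have hpow : ∀ ω, (f ω ^ (1 / p)) ^ p = f ω := fun ω => by
    rw [← ENNReal.rpow_mul, one_div_mul_cancel (by linarith), ENNReal.rpow_one]
  simpa only [eLpNorm'_eq_lintegral_enorm, enorm_eq_self, ENNReal.rpow_one, div_one, hpow] using h

lemma lintegral_enorm_sub_integral_le {Y : Ω → ℝ} (hY : MemLp Y 2 P) :
    ∫⁻ ω, ‖Y ω - P[Y]‖ₑ ∂P ≤ ENNReal.ofReal Var[Y; P] ^ (1 / 2 : ℝ) := by
  have hsq : ∀ ω, ‖Y ω - P[Y]‖ₑ = (‖Y ω - P[Y]‖ₑ ^ 2) ^ (1 / 2 : ℝ) := fun ω => by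
    rw [← ENNReal.rpow_two, ← ENNReal.rpow_mul]; norm_num
  calc ∫⁻ ω, ‖Y ω - P[Y]‖ₑ ∂P = ∫⁻ ω, (‖Y ω - P[Y]‖ₑ ^ 2) ^ (1 / 2 : ℝ) ∂P :=
        lintegral_congr hsq
    _ ≤ evariance Y P ^ (1 / 2 : ℝ) :=
        lintegral_rpow_one_div_le one_le_two ((hY.aemeasurable.sub_const _).enorm.pow_const 2)
    _ = _ := by rw [hY.ofReal_variance_eq]

lemma variance_le_integral_of_mem_Icc {g : Ω → ℝ} (hg : AEMeasurable g P)
    (h : ∀ ω, g ω ∈ Set.Icc 0 1) : Var[g; P] ≤ P[g] := by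
  have hint : Integrable g P := .of_mem_Icc 0 1 hg (ae_of_all _ h)
  calc Var[g; P] ≤ ∫ ω, g ω ^ 2 ∂P := variance_le_expectation_sq hg.aestronglyMeasurable
    _ ≤ P[g] := integral_mono_of_nonneg (ae_of_all _ fun ω => sq_nonneg (g ω)) hint
        (ae_of_all _ fun ω => pow_le_of_le_one (h ω).1 (h ω).2 two_ne_zero)

end Moments

section Sampling

variable {E : Type*} [MeasurableSpace E] {n : ℕ}

instance (μ : Measure E) [IsProbabilityMeasure μ] : IsProbabilityMeasure (sampleMeasure μ n) := by
  unfold sampleMeasure; infer_instance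

instance [NeZero n] (X : Fin n → E) : IsProbabilityMeasure (empiricalMeasure n X) :=
  ⟨by simp [empiricalMeasure, ENNReal.inv_mul_cancel, NeZero.ne n]⟩

lemma empiricalMeasure_apply (X : Fin n → E) {s : Set E} (hs : MeasurableSet s) :
    empiricalMeasure n X s = (n : ℝ≥0∞)⁻¹ * ∑ i, s.indicator 1 (X i) := by
  simp [empiricalMeasure, hs]

/-- The empirical measure as a Markov kernel from samples to the sampled space. -/
noncomputable def empiricalKernel (E : Type*) [MeasurableSpace E] (n : ℕ) :
    Kernel (Fin n → E) E where
  toFun := empiricalMeasure n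
  measurable' := measurable_of_measurable_coe _ fun s hs => by
    simp only [empiricalMeasure_apply _ hs]
    fun_prop (disch := exact hs)

lemma empiricalKernel_apply (X : Fin n → E) : empiricalKernel E n X = empiricalMeasure n X := rfl

lemma empiricalKernel_comp_sampleMeasure [NeZero n] (μ : Measure E) [IsProbabilityMeasure μ] :
    empiricalKernel E n ∘ₘ sampleMeasure μ n = μ := by
  ext s hs
  have hmap (i : Fin n) : ∫⁻ X, s.indicator 1 (X i) ∂(sampleMeasure μ n) = μ s := by
    rw [← lintegral_indicator_one hs]
    exact (measurePreserving_eval (fun _ : Fin n => μ) i).lintegral_comp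
      (by fun_prop (disch := exact hs))
  simp only [Measure.bind_apply hs (empiricalKernel E n).aemeasurable, empiricalKernel_apply,
    empiricalMeasure_apply _ hs]
  rw [lintegral_const_mul _ (by fun_prop (disch := exact hs)),
    lintegral_finsetSum _ (fun i _ => by fun_prop (disch := exact hs))]
  simp [hmap, ← mul_assoc, ENNReal.inv_mul_cancel, NeZero.ne n]

lemma ae_ae_comp_empiricalMeasure [NeZero n] (μ : Measure E) [IsProbabilityMeasure μ]
    {E' : Type*} [MeasurableSpace E'] (Q : Kernel E E') {q : E' → Prop}
    (hq : ∀ᵐ y ∂(Q ∘ₘ μ), q y) :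
    ∀ᵐ X ∂(sampleMeasure μ n), ∀ᵐ y ∂(Q ∘ₘ empiricalMeasure n X), q y := by
  rw [← empiricalKernel_comp_sampleMeasure (n := n) μ, Measure.comp_assoc] at hq
  filter_upwards [Measure.ae_ae_of_ae_comp hq] with X hX
  rwa [Kernel.comp_apply] at hX

variable [MeasurableSingletonClass E]

lemma integral_empiricalMeasure (X : Fin n → E) (g : E → ℝ) :
    ∫ x, g x ∂(empiricalMeasure n X) = (n : ℝ)⁻¹ * ∑ i, g (X i) := by
  rw [empiricalMeasure, integral_smul_measure,
    integral_finsetSum_measure fun i _ => integrable_dirac (by simp)]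
  simp

lemma lintegral_enorm_integral_empiricalMeasure_sub_le [NeZero n] (μ : Measure E)
    [IsProbabilityMeasure μ] {g : E → ℝ} (hg : MemLp g 2 μ) :
    ∫⁻ X, ‖∫ x, g x ∂(empiricalMeasure n X) - μ[g]‖ₑ ∂(sampleMeasure μ n) ≤
      ENNReal.ofReal (Var[g; μ] / n) ^ (1 / 2 : ℝ) := by
  have hn : (n : ℝ) ≠ 0 := NeZero.ne _
  have hgs (i : Fin n) : MemLp (fun X : Fin n → E => g (X i)) 2 (sampleMeasure μ n) :=
    hg.comp_measurePreserving (measurePreserving_eval (fun _ => μ) i)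
  let Y : (Fin n → E) → ℝ := fun X => (n : ℝ)⁻¹ * (∑ i, fun X : Fin n → E => g (X i)) X
  have hY : MemLp Y 2 (sampleMeasure μ n) := (memLp_finsetSum' _ fun i _ => hgs i).const_mul _
  have hmean : (sampleMeasure μ n)[Y] = μ[g] := by
    have (i : Fin n) : ∫ X, g (X i) ∂(sampleMeasure μ n) = μ[g] :=
      integral_comp_eval (μ := fun _ : Fin n => μ) (i := i) hg.aestronglyMeasurable
    simp only [Y, Finset.sum_apply]
    rw [integral_const_mul, integral_finsetSum _ fun i _ => (hgs i).integrable one_le_two]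
    simp [this, hn]
  have hvar : Var[Y; sampleMeasure μ n] = Var[g; μ] / n := by
    rw [variance_const_mul, sampleMeasure, variance_sum_pi (μ := fun _ : Fin n => μ) fun _ => hg]
    simp only [inv_pow, Finset.sum_const, Finset.card_univ, Fintype.card_fin, nsmul_eq_mul]
    field_simp
  rw [← hvar, ← hmean]
  refine (lintegral_congr fun X => ?_).trans_le (lintegral_enorm_sub_integral_le hY)
  simp only [integral_empiricalMeasure, Y, Finset.sum_apply]

end Sampling

section HeavyAtoms

variable {E : Type*} [MeasurableSpace E]

lemma eq_dirac_of_ae_eq {α : Measure E} [IsProbabilityMeasure α] {y : E} (h : ∀ᵐ x ∂α, x = y) :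
    α = dirac y := by
  calc α = α.map id := Measure.map_id.symm
    _ = α.map fun _ => y := Measure.map_congr h
    _ = dirac y := by simp

variable [MeasurableSingletonClass E] {n N : ℕ}

/-- The atoms of `ν` of mass at least `1 / N`. A measure of the form `(1 / N) ∑ i, δ (x i)` is
carried by these, whether or not the points `x i` are distinct. -/
def heavyAtoms (N : ℕ) (ν : Measure E) : Set E := {y | (N : ℝ≥0∞)⁻¹ ≤ ν {y}}

lemma countable_heavyAtoms (N : ℕ) (ν : Measure E) [IsFiniteMeasure ν] :
    (heavyAtoms N ν).Countable := by
  refine (Measure.finite_const_le_meas_of_disjoint_iUnion₀ ν (As := fun y => {y})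
    (ε := (N : ℝ≥0∞)⁻¹) (by simp) (fun y => (measurableSet_singleton y).nullMeasurableSet)
    (fun x y hxy => ?_) (measure_ne_top ν _)).countable
  exact (Set.disjoint_singleton.2 hxy).aedisjoint

lemma ae_mem_heavyAtoms_empiricalMeasure (x : Fin N → E) :
    ∀ᵐ y ∂(empiricalMeasure N x), y ∈ heavyAtoms N (empiricalMeasure N x) := by
  have hmem : ∀ i, x i ∈ heavyAtoms N (empiricalMeasure N x) := fun i => by
    rw [heavyAtoms, Set.mem_ofPred_eq, empiricalMeasure_apply _ (measurableSet_singleton _)]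
    refine le_mul_of_one_le_right' ?_
    calc (1 : ℝ≥0∞) = Set.indicator {x i} 1 (x i) := by simp
      _ ≤ _ := Finset.single_le_sum (f := fun j => Set.indicator {x i} (1 : E → ℝ≥0∞) (x j))
        (fun _ _ => zero_le) (Finset.mem_univ i)
  refine Measure.ae_smul_measure ?_ _
  rw [ae_finsetSum_measure_iff]
  exact fun i _ => by simpa [ae_dirac_eq] using hmem i

lemma eq_of_ae_mem_heavyAtoms_one {α ν : Measure E} [IsProbabilityMeasure α]
    [IsProbabilityMeasure ν] (hν : ∀ᵐ y ∂ν, y ∈ heavyAtoms 1 ν)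
    (hα : ∀ᵐ y ∂α, y ∈ heavyAtoms 1 ν) : α = ν := by
  obtain ⟨y, hy⟩ := hν.exists
  have hνy : ν = dirac y := by
    refine eq_dirac_of_ae_eq ((prob_compl_eq_zero_iff (measurableSet_singleton y)).2 ?_)
    exact prob_le_one.antisymm (by simpa [heavyAtoms] using hy)
  rw [hνy] at hα ⊢
  refine eq_dirac_of_ae_eq ?_
  filter_upwards [hα] with x hx
  by_contra hxy
  simp [heavyAtoms, Ne.symm hxy] at hx

lemma lintegral_enorm_comp_sub_le [NeZero n] (μ : Measure E) [IsProbabilityMeasure μ] {E' : Type*}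
    [MeasurableSpace E'] (Q : Kernel E E') [IsMarkovKernel Q] {s : Set E'} (hs : MeasurableSet s) :
    ∫⁻ X, ‖(Q ∘ₘ empiricalMeasure n X).real s - (Q ∘ₘ μ).real s‖ₑ ∂(sampleMeasure μ n) ≤
      ((Q ∘ₘ μ) s / n) ^ (1 / 2 : ℝ) := by
  have hmem : ∀ x, (Q x).real s ∈ Set.Icc (0 : ℝ) 1 :=
    fun x => ⟨measureReal_nonneg, measureReal_le_one⟩
  have hmeas : Measurable fun x => (Q x).real s := (Q.measurable_coe hs).ennreal_toReal
  have hn : (0 : ℝ) < n := mod_cast NeZero.pos n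
  calc ∫⁻ X, ‖(Q ∘ₘ empiricalMeasure n X).real s - (Q ∘ₘ μ).real s‖ₑ ∂(sampleMeasure μ n)
      ≤ ENNReal.ofReal (Var[fun x => (Q x).real s; μ] / n) ^ (1 / 2 : ℝ) := by
        simp only [measureReal_comp Q _ hs]
        exact lintegral_enorm_integral_empiricalMeasure_sub_le μ
          (memLp_of_bounded (ae_of_all _ hmem) hmeas.aestronglyMeasurable 2)
    _ ≤ ENNReal.ofReal ((Q ∘ₘ μ).real s / n) ^ (1 / 2 : ℝ) := by
        rw [measureReal_comp Q _ hs]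
        gcongr
        exact variance_le_integral_of_mem_Icc hmeas.aemeasurable hmem
    _ = _ := by
        rw [ENNReal.ofReal_div_of_pos hn, ofReal_measureReal, ENNReal.ofReal_natCast]

/-- The `f`-weighted `ℓ¹` distance between the masses that `α` and `ν` give to the heavy atoms
of `ν`. -/
noncomputable def atomDiscrepancy (N : ℕ) (f : E → ℝ≥0∞) (α ν : Measure E) : ℝ≥0∞ :=
  ∑' y : heavyAtoms N ν, ‖α.real {(y : E)} - ν.real {(y : E)}‖ₑ * f y

lemma measurable_enorm_comp_empiricalMeasure_sub (Q : Kernel E E) (ν : Measure E) (y : E) :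
    Measurable fun X => ‖(Q ∘ₘ empiricalMeasure n X).real {y} - ν.real {y}‖ₑ :=
  have hQ := (Q ∘ₖ empiricalKernel E n).measurable_coe (measurableSet_singleton y)
  (hQ.ennreal_toReal.sub_const _).enorm

lemma measurable_atomDiscrepancy (Q : Kernel E E) (ν : Measure E) [IsFiniteMeasure ν]
    (f : E → ℝ≥0∞) :
    Measurable fun X => atomDiscrepancy N f (Q ∘ₘ empiricalMeasure n X) ν := by
  have : Countable (heavyAtoms N ν) := (countable_heavyAtoms N ν).to_subtype
  exact .tsum fun y => (measurable_enorm_comp_empiricalMeasure_sub Q ν y).mul_const _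

lemma lintegral_atomDiscrepancy_le [NeZero n] (μ : Measure E) [IsProbabilityMeasure μ]
    (Q : Kernel E E) [IsMarkovKernel Q] (f : E → ℝ≥0∞) :
    ∫⁻ X, atomDiscrepancy N f (Q ∘ₘ empiricalMeasure n X) (Q ∘ₘ μ) ∂(sampleMeasure μ n) ≤
      (N / n : ℝ≥0∞) ^ (1 / 2 : ℝ) * ∫⁻ y, f y ∂(Q ∘ₘ μ) := by
  have hS := countable_heavyAtoms N (Q ∘ₘ μ)
  have : Countable (heavyAtoms N (Q ∘ₘ μ)) := hS.to_subtype
  have hmeas := measurable_enorm_comp_empiricalMeasure_sub (n := n) Q (Q ∘ₘ μ)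
  calc ∫⁻ X, atomDiscrepancy N f (Q ∘ₘ empiricalMeasure n X) (Q ∘ₘ μ) ∂(sampleMeasure μ n)
      = ∑' y : heavyAtoms N (Q ∘ₘ μ),
          (∫⁻ X, ‖(Q ∘ₘ empiricalMeasure n X).real {(y : E)} - (Q ∘ₘ μ).real {(y : E)}‖ₑ
            ∂(sampleMeasure μ n)) * f y := by
        simp only [atomDiscrepancy]
        rw [lintegral_tsum fun y : heavyAtoms N (Q ∘ₘ μ) => ((hmeas y).mul_const _).aemeasurable]
        exact tsum_congr fun y => lintegral_mul_const _ (hmeas y)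
    _ ≤ ∑' y : heavyAtoms N (Q ∘ₘ μ),
          (N / n : ℝ≥0∞) ^ (1 / 2 : ℝ) * (Q ∘ₘ μ) {(y : E)} * f y := by
        refine ENNReal.tsum_le_tsum fun y => ?_
        gcongr
        exact (lintegral_enorm_comp_sub_le μ Q (measurableSet_singleton _)).trans
          (rpow_half_div_le_mul_of_inv_le (measure_ne_top _ _) (ENNReal.natCast_ne_top N) y.2)
    _ = (N / n : ℝ≥0∞) ^ (1 / 2 : ℝ) * ∫⁻ y in heavyAtoms N (Q ∘ₘ μ), f y ∂(Q ∘ₘ μ) := by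
        rw [lintegral_countable f hS, ← ENNReal.tsum_mul_left]
        exact tsum_congr fun y => by ring
    _ ≤ _ := by
        refine mul_le_mul_right ?_ _
        exact setLIntegral_le_lintegral _ _

lemma lintegral_sub_le_atomDiscrepancy_left (f : E → ℝ≥0∞) {α ν : Measure E} [IsFiniteMeasure α]
    [IsFiniteMeasure ν] (hα : ∀ᵐ y ∂α, y ∈ heavyAtoms N ν) :
    ∫⁻ y, f y ∂(α - ν) ≤ atomDiscrepancy N f α ν :=
  lintegral_sub_le_tsum α ν (countable_heavyAtoms N ν) hα f

lemma lintegral_sub_le_atomDiscrepancy_right (f : E → ℝ≥0∞) {α ν : Measure E} [IsFiniteMeasure α]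
    [IsFiniteMeasure ν] (hν : ∀ᵐ y ∂ν, y ∈ heavyAtoms N ν) :
    ∫⁻ y, f y ∂(ν - α) ≤ atomDiscrepancy N f α ν := by
  simpa only [atomDiscrepancy, enorm_sub_rev] using
    lintegral_sub_le_tsum ν α (countable_heavyAtoms N ν) hν f

end HeavyAtoms

section Multiscale

variable {E : Type*} [MetricSpace E] [MeasurableSpace E] {p : ℝ} {n N : ℕ}

/-- The expected cost of transporting the excess of `Q ∘ₘ μ_n` over `Q ∘ₘ μ` onto its deficit,
where `μ_n` is the empirical measure of `μ` with sample size `n` and the kernel `Q` rounds samples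
of `μ` to points of a quantizer. -/
noncomputable def expExcessCost (p : ℝ) (μ : Measure E) (n : ℕ) (Q : Kernel E E) : ℝ≥0∞ :=
  ∫⁻ X, Wp p (Q ∘ₘ empiricalMeasure n X - Q ∘ₘ μ) (Q ∘ₘ μ - Q ∘ₘ empiricalMeasure n X)
    ∂(sampleMeasure μ n)

lemma Wp_zero_zero (hp : 0 < p) : Wp p (0 : Measure E) 0 = 0 := by
  simpa [hp] using Wp_le_of_coupling (p := p) (0 : Measure (E × E)) (by simp) (by simp)

variable [TopologicalSpace.SeparableSpace E] [BorelSpace E]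

variable [NeZero n] (μ : Measure E) [IsProbabilityMeasure μ]

lemma expExcessCost_eq_zero (hp : 0 < p) (Q : Kernel E E) [IsMarkovKernel Q]
    (hQ : ∀ᵐ y ∂(Q ∘ₘ μ), y ∈ heavyAtoms 1 (Q ∘ₘ μ)) : expExcessCost p μ n Q = 0 := by
  refine (lintegral_congr_ae ?_).trans lintegral_zero
  filter_upwards [ae_ae_comp_empiricalMeasure μ Q hQ] with X hX
  rw [eq_of_ae_mem_heavyAtoms_one hQ hX, Measure.sub_self, Wp_zero_zero hp]

lemma expExcessCost_le_kernelCost_add (hp : 1 ≤ p) (Q κ : Kernel E E) [IsMarkovKernel Q]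
    [IsMarkovKernel κ] (hQ : ∀ᵐ y ∂(Q ∘ₘ μ), y ∈ heavyAtoms N (Q ∘ₘ μ)) :
    expExcessCost p μ n Q ≤
      2 * ((N / n : ℝ≥0∞) ^ (1 / 2 : ℝ) * ∫⁻ y, kernelCost p κ y ∂(Q ∘ₘ μ)) ^ (1 / p) +
        expExcessCost p μ n (κ ∘ₖ Q) := by
  let D : (Fin n → E) → ℝ≥0∞ :=
    fun X => atomDiscrepancy N (kernelCost p κ) (Q ∘ₘ empiricalMeasure n X) (Q ∘ₘ μ)
  have hD : Measurable D := measurable_atomDiscrepancy Q _ _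
  have hp0 : 0 ≤ 1 / p := by positivity
  calc expExcessCost p μ n Q
      ≤ ∫⁻ X, (2 * D X ^ (1 / p) + Wp p ((κ ∘ₖ Q) ∘ₘ empiricalMeasure n X - (κ ∘ₖ Q) ∘ₘ μ)
          ((κ ∘ₖ Q) ∘ₘ μ - (κ ∘ₖ Q) ∘ₘ empiricalMeasure n X)) ∂(sampleMeasure μ n) := by
        refine lintegral_mono_ae ?_
        filter_upwards [ae_ae_comp_empiricalMeasure μ Q hQ] with X hX
        refine (Wp_sub_le_kernelCost_add hp κ _ _ (countable_heavyAtoms N _) hQ).trans ?_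
        simp only [Measure.comp_assoc, two_mul]
        gcongr
        · exact lintegral_sub_le_atomDiscrepancy_left _ hX
        · exact lintegral_sub_le_atomDiscrepancy_right _ hQ
    _ = 2 * ∫⁻ X, D X ^ (1 / p) ∂(sampleMeasure μ n) + expExcessCost p μ n (κ ∘ₖ Q) := by
        rw [lintegral_add_left (by fun_prop), lintegral_const_mul _ (by fun_prop), expExcessCost]
    _ ≤ _ := by
        gcongr
        exact (lintegral_rpow_one_div_le hp hD.aemeasurable).trans
          (ENNReal.rpow_le_rpow (lintegral_atomDiscrepancy_le μ Q _) hp0)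

lemma expExcessCost_le_Wp_add [NeZero N] (hp : 1 ≤ p) (Q : Kernel E E) [IsMarkovKernel Q]
    {ν : Measure E} [IsProbabilityMeasure ν] {M : ℕ} (hν : ∀ᵐ y ∂ν, y ∈ heavyAtoms M ν)
    (hQ : ∀ᵐ y ∂(Q ∘ₘ μ), y ∈ heavyAtoms N (Q ∘ₘ μ)) {B : ℝ≥0∞}
    (hB : ∀ R : Kernel E E, IsMarkovKernel R → R ∘ₘ μ = ν → expExcessCost p μ n R ≤ B) :
    expExcessCost p μ n Q ≤
      2 * (N / n : ℝ≥0∞) ^ (1 / (2 * p)) * Wp p (Q ∘ₘ μ) ν + B := by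
  have hp0 : 0 < p := by linarith
  have hn : (n : ℝ≥0∞) ≠ 0 := NeZero.ne _
  have hratio : (N / n : ℝ≥0∞) ≠ 0 ∧ (N / n : ℝ≥0∞) ≠ ∞ :=
    ⟨by simp [NeZero.ne], ENNReal.div_ne_top (by simp) hn⟩
  refine le_mul_add_of_forall_gt (mul_ne_zero two_ne_zero (by simp [hratio, hp0]))
    (ENNReal.mul_ne_top (by simp) (ENNReal.rpow_ne_top_of_nonneg (by positivity) hratio.2))
    fun c hc => ?_
  obtain ⟨κ, _, hκν, hκ⟩ := exists_kernel_of_Wp_lt (countable_heavyAtoms M ν) hν hc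
  calc expExcessCost p μ n Q
      ≤ 2 * ((N / n : ℝ≥0∞) ^ (1 / 2 : ℝ) * ∫⁻ y, kernelCost p κ y ∂(Q ∘ₘ μ)) ^ (1 / p) +
          expExcessCost p μ n (κ ∘ₖ Q) := expExcessCost_le_kernelCost_add μ hp Q κ hQ
    _ = 2 * (N / n : ℝ≥0∞) ^ (1 / (2 * p)) * (∫⁻ y, kernelCost p κ y ∂(Q ∘ₘ μ)) ^ (1 / p) +
          expExcessCost p μ n (κ ∘ₖ Q) := by
        rw [ENNReal.mul_rpow_of_nonneg _ _ (by positivity), ← ENNReal.rpow_mul,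
          one_div_mul_one_div, mul_assoc]
    _ ≤ 2 * (N / n : ℝ≥0∞) ^ (1 / (2 * p)) * c + B := by
        gcongr
        exact hB _ inferInstance (by rw [← Measure.comp_assoc, hκν])

lemma expExcessCost_le_sum (hp : 1 ≤ p) (N : ℕ → ℕ) [∀ j, NeZero (N j)] (hN : N 0 = 1)
    (ν : ℕ → Measure E) [∀ j, IsProbabilityMeasure (ν j)]
    (hν : ∀ j, ∀ᵐ y ∂(ν j), y ∈ heavyAtoms (N j) (ν j)) (k : ℕ) (Q : Kernel E E)
    [IsMarkovKernel Q] (hQ : Q ∘ₘ μ = ν k) :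
    expExcessCost p μ n Q ≤ ∑ j ∈ Finset.range k,
      2 * (N (j + 1) / n : ℝ≥0∞) ^ (1 / (2 * p)) * (Wp p (ν (j + 1)) μ + Wp p (ν j) μ) := by
  induction k generalizing Q with
  | zero =>
    have h := hν 0
    rw [← hQ, hN] at h
    rw [expExcessCost_eq_zero μ (by linarith) Q h]
    exact zero_le
  | succ k ih =>
    have h := hν (k + 1)
    rw [← hQ] at h
    refine (expExcessCost_le_Wp_add μ hp Q (hν k) h fun R _ hR => ih R hR).trans ?_
    rw [Finset.sum_range_succ, add_comm, hQ, Wp_comm p (ν k) μ]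
    gcongr
    exact Wp_triangle hp _ _ (countable_heavyAtoms _ _) (hν k)

end Multiscale

section Empirical

variable {E : Type*} [MetricSpace E] [TopologicalSpace.SeparableSpace E] [MeasurableSpace E]
  [BorelSpace E] {p : ℝ} {n : ℕ} [NeZero n] (μ : Measure E) [IsProbabilityMeasure μ]

lemma lintegral_kernelCost_empiricalMeasure_le (hp : 1 ≤ p) (Q : Kernel E E) [IsSFiniteKernel Q] :
    ∫⁻ X, (∫⁻ x, kernelCost p Q x ∂(empiricalMeasure n X)) ^ (1 / p) ∂(sampleMeasure μ n) ≤
      (∫⁻ x, kernelCost p Q x ∂μ) ^ (1 / p) := by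
  have hQ := measurable_kernelCost p Q
  refine (lintegral_rpow_one_div_le hp
    (hQ.lintegral_kernel (κ := empiricalKernel E n)).aemeasurable).trans_eq ?_
  conv_rhs => rw [← empiricalKernel_comp_sampleMeasure (n := n) μ,
    Measure.lintegral_bind (empiricalKernel E n).aemeasurable hQ.aemeasurable]

lemma Wp_empiricalMeasure_le (hp : 1 ≤ p) (Q : Kernel E E) [IsMarkovKernel Q] (X : Fin n → E) :
    Wp p (empiricalMeasure n X) μ ≤
      (∫⁻ x, kernelCost p Q x ∂(empiricalMeasure n X)) ^ (1 / p) +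
        Wp p (Q ∘ₘ empiricalMeasure n X - Q ∘ₘ μ) (Q ∘ₘ μ - Q ∘ₘ empiricalMeasure n X) +
        Wp p (Q ∘ₘ μ) μ := by
  have hcountable := countable_heavyAtoms n (empiricalMeasure n X)
  have hmem := ae_mem_heavyAtoms_empiricalMeasure X
  set α := empiricalMeasure n X
  calc Wp p α μ = Wp p μ α := Wp_comm p α μ
    _ ≤ Wp p μ (Q ∘ₘ μ) + (Wp p (Q ∘ₘ μ) (Q ∘ₘ α) + Wp p (Q ∘ₘ α) α) :=
        (Wp_triangle hp _ _ hcountable hmem).trans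
          (add_le_add_right (Wp_triangle hp _ _ hcountable hmem) _)
    _ = Wp p α (Q ∘ₘ α) + Wp p (Q ∘ₘ α) (Q ∘ₘ μ) + Wp p (Q ∘ₘ μ) μ := by
        rw [Wp_comm p μ, Wp_comm p (Q ∘ₘ μ) (Q ∘ₘ α), Wp_comm p (Q ∘ₘ α) α]
        ring
    _ ≤ _ := by
        gcongr
        · exact Wp_comp_le p α Q
        · exact Wp_le_Wp_sub (by linarith) _ _

lemma expWp_le_kernelCost_add (hp : 1 ≤ p) (Q : Kernel E E) [IsMarkovKernel Q] :
    expWp p μ n ≤ (∫⁻ x, kernelCost p Q x ∂μ) ^ (1 / p) + expExcessCost p μ n Q +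
      Wp p (Q ∘ₘ μ) μ := by
  have hcost : Measurable fun X : Fin n → E => ∫⁻ x, kernelCost p Q x ∂(empiricalMeasure n X) :=
    (measurable_kernelCost p Q).lintegral_kernel (κ := empiricalKernel E n)
  calc expWp p μ n ≤ ∫⁻ X, ((∫⁻ x, kernelCost p Q x ∂(empiricalMeasure n X)) ^ (1 / p) +
          Wp p (Q ∘ₘ empiricalMeasure n X - Q ∘ₘ μ) (Q ∘ₘ μ - Q ∘ₘ empiricalMeasure n X) +
          Wp p (Q ∘ₘ μ) μ) ∂(sampleMeasure μ n) :=
        lintegral_mono (Wp_empiricalMeasure_le μ hp Q)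
    _ = ∫⁻ X, (∫⁻ x, kernelCost p Q x ∂(empiricalMeasure n X)) ^ (1 / p) ∂(sampleMeasure μ n) +
          expExcessCost p μ n Q + Wp p (Q ∘ₘ μ) μ := by
        rw [lintegral_add_right _ measurable_const, lintegral_add_left (hcost.pow_const _),
          lintegral_const, measure_univ, mul_one, expExcessCost]
    _ ≤ _ := by
        gcongr
        exact lintegral_kernelCost_empiricalMeasure_le μ hp Q

lemma expWp_le_add_sum (hp : 1 ≤ p) (N : ℕ → ℕ) [∀ j, NeZero (N j)] (hN : N 0 = 1)
    (ν : ℕ → Measure E) [∀ j, IsProbabilityMeasure (ν j)]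
    (hν : ∀ j, ∀ᵐ y ∂(ν j), y ∈ heavyAtoms (N j) (ν j)) (k : ℕ) :
    expWp p μ n ≤ 2 * Wp p (ν k) μ + ∑ j ∈ Finset.range k,
      2 * (N (j + 1) / n : ℝ≥0∞) ^ (1 / (2 * p)) * (Wp p (ν (j + 1)) μ + Wp p (ν j) μ) := by
  set R : ℝ≥0∞ := ∑ j ∈ Finset.range k,
    2 * (N (j + 1) / n : ℝ≥0∞) ^ (1 / (2 * p)) * (Wp p (ν (j + 1)) μ + Wp p (ν j) μ)
  suffices expWp p μ n ≤ 1 * Wp p (ν k) μ + (R + Wp p (ν k) μ) from this.trans_eq (by ring)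
  refine le_mul_add_of_forall_gt one_ne_zero one_ne_top fun c hc => ?_
  rw [gt_iff_lt, Wp_comm] at hc
  obtain ⟨Q, _, hQν, hQ⟩ := exists_kernel_of_Wp_lt (countable_heavyAtoms (N k) _) (hν k) hc
  calc expWp p μ n ≤ (∫⁻ x, kernelCost p Q x ∂μ) ^ (1 / p) + expExcessCost p μ n Q +
          Wp p (Q ∘ₘ μ) μ := expWp_le_kernelCost_add μ hp Q
    _ ≤ c + R + Wp p (ν k) μ := by
        rw [hQν]
        gcongr
        exact expExcessCost_le_sum μ hp N hN ν hν k Q hQν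
    _ = 1 * c + (R + Wp p (ν k) μ) := by rw [one_mul, add_assoc]

end Empirical

section GeometricDecay

lemma le_pow_mul_of_le_mul_succ {w : ℕ → ℝ≥0∞} {r : ℝ≥0∞} (h : ∀ j, w j ≤ r * w (j + 1))
    (j t : ℕ) : w j ≤ r ^ t * w (j + t) := by
  induction t with
  | zero => simp
  | succ t ih =>
    calc w j ≤ r ^ t * w (j + t) := ih
      _ ≤ r ^ t * (r * w (j + t + 1)) := by gcongr; exact h _
      _ = r ^ (t + 1) * w (j + (t + 1)) := by rw [← mul_assoc, ← pow_succ, add_assoc]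

lemma two_pow_div_rpow_mul_pow_eq_one (q : ℝ) (j t : ℕ) :
    ((2 ^ j : ℕ) / (2 ^ (j + t) : ℕ) : ℝ≥0∞) ^ q * ((2 : ℝ≥0∞) ^ q) ^ t = 1 := by
  have hratio : ((2 ^ j : ℕ) / (2 ^ (j + t) : ℕ) : ℝ≥0∞) * 2 ^ t = 1 := by
    push_cast
    rw [ENNReal.mul_div_right_comm.symm, ← pow_add]
    exact ENNReal.div_self (by simp) (by simp)
  rw [← ENNReal.rpow_mul_natCast, mul_comm q, ENNReal.rpow_natCast_mul,
    ← ENNReal.mul_rpow_of_ne_top (by finiteness) (by finiteness), hratio, ENNReal.one_rpow]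

lemma two_rpow_le_three_halves {q : ℝ} (hq : q ≤ 1 / 2) : (2 : ℝ≥0∞) ^ q ≤ 3 / 2 := by
  calc (2 : ℝ≥0∞) ^ q ≤ 2 ^ (1 / 2 : ℝ) := ENNReal.rpow_le_rpow_of_exponent_le one_le_two hq
    _ ≤ ((3 / 2) ^ 2) ^ (1 / 2 : ℝ) := by
      gcongr
      rw [← ENNReal.toReal_le_toReal (by finiteness) (by finiteness)]
      norm_num
    _ = 3 / 2 := by rw [← ENNReal.rpow_two, ← ENNReal.rpow_mul]; norm_num

lemma two_mul_rpow_mul_add_le {p : ℝ} (hp : 1 ≤ p) {w : ℕ → ℝ≥0∞}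
    (hw : ∀ j, w j ≤ 2 ^ (1 / (2 * p)) * w (j + 1)) {j k : ℕ} (hjk : j < k) :
    2 * ((2 ^ (j + 1) : ℕ) / (2 ^ k : ℕ) : ℝ≥0∞) ^ (1 / (2 * p)) * (w (j + 1) + w j) ≤
      5 * w k := by
  obtain ⟨t, rfl⟩ := Nat.exists_eq_add_of_le (Nat.succ_le_of_lt hjk)
  set r : ℝ≥0∞ := 2 ^ (1 / (2 * p))
  set s : ℝ≥0∞ := ((2 ^ (j + 1) : ℕ) / (2 ^ (j + 1 + t) : ℕ) : ℝ≥0∞) ^ (1 / (2 * p))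
  have hr : r ≤ 3 / 2 :=
    two_rpow_le_three_halves (one_div_le_one_div_of_le two_pos (by linarith))
  calc 2 * s * (w (j + 1) + w j) ≤ 2 * s * (w (j + 1) + 3 / 2 * w (j + 1)) := by
        gcongr
        exact (hw j).trans (by gcongr)
    _ = (2 + 2 * (3 / 2)) * s * w (j + 1) := by ring
    _ ≤ (2 + 2 * (3 / 2)) * s * (r ^ t * w (j + 1 + t)) := by
        gcongr
        exact le_pow_mul_of_le_mul_succ hw (j + 1) t
    _ = (2 + 2 * (3 / 2)) * (s * r ^ t) * w (j + 1 + t) := by ring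
    _ = 5 * w (j + 1 + t) := by
        rw [two_pow_div_rpow_mul_pow_eq_one, mul_one,
          ENNReal.mul_div_cancel two_ne_zero ofNat_ne_top]
        norm_num

end GeometricDecay

lemma expWp_two_pow_le {E : Type*} [MetricSpace E] [TopologicalSpace.SeparableSpace E]
    [MeasurableSpace E] [BorelSpace E] {p : ℝ} (hp : 1 ≤ p) (μ : Measure E)
    [IsProbabilityMeasure μ] (ν : ℕ → Measure E) [∀ j, IsProbabilityMeasure (ν j)]
    (hν : ∀ j, ∀ᵐ y ∂(ν j), y ∈ heavyAtoms (2 ^ j) (ν j))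
    (hdecay : ∀ j, Wp p (ν j) μ ≤ 2 ^ (1 / (2 * p)) * Wp p (ν (j + 1)) μ) (k : ℕ) :
    expWp p μ (2 ^ k) ≤ 5 * (1 + k) * Wp p (ν k) μ := by
  calc expWp p μ (2 ^ k)
      ≤ 2 * Wp p (ν k) μ + ∑ j ∈ Finset.range k,
          2 * ((2 ^ (j + 1) : ℕ) / (2 ^ k : ℕ) : ℝ≥0∞) ^ (1 / (2 * p)) *
            (Wp p (ν (j + 1)) μ + Wp p (ν j) μ) :=
        expWp_le_add_sum μ hp (2 ^ ·) (pow_zero 2) ν hν k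
    _ ≤ 5 * Wp p (ν k) μ + ∑ _j ∈ Finset.range k, 5 * Wp p (ν k) μ := by
        refine add_le_add (by gcongr; norm_num) (Finset.sum_le_sum fun j hj => ?_)
        exact two_mul_rpow_mul_add_le hp hdecay (Finset.mem_range.1 hj)
    _ = 5 * (1 + k) * Wp p (ν k) μ := by
        rw [Finset.sum_const, Finset.card_range, nsmul_eq_mul]
        ring

end UniformQuantization

open UniformQuantization

theorem stmt_2_general {E : Type*} [MetricSpace E] [TopologicalSpace.SeparableSpace E]
    [MeasurableSpace E] [BorelSpace E] (p : ℝ) (hp : 1 ≤ p)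
    (μ : Measure E) [IsProbabilityMeasure μ]
    (ν : ℕ → Measure E) [∀ k, IsProbabilityMeasure (ν k)]
    (hν : ∀ k, ∀ᵐ y ∂(ν k), y ∈ heavyAtoms (2 ^ k) (ν k))
    (hdecay : ∀ k : ℕ,
      ENNReal.ofReal ((2 : ℝ) ^ (-(1 / (2 * p)))) * Wp p (ν k) μ ≤ Wp p (ν (k + 1)) μ) (k : ℕ) :
    ENNReal.ofReal (1 / (5 * (1 + (k : ℝ)))) * expWp p μ (2 ^ k) ≤ Wp p (ν k) μ := by
  have hstep : ∀ j, Wp p (ν j) μ ≤ 2 ^ (1 / (2 * p)) * Wp p (ν (j + 1)) μ := fun j => by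
    have h := hdecay j
    rw [← ENNReal.ofReal_rpow_of_pos two_pos, ENNReal.ofReal_ofNat, ENNReal.rpow_neg] at h
    exact (ENNReal.inv_mul_le_iff (by simp) (by finiteness)).1 h
  have hconst : ENNReal.ofReal (5 * (1 + (k : ℝ))) = 5 * (1 + k) := by
    rw [ENNReal.ofReal_mul (by norm_num), ENNReal.ofReal_add zero_le_one k.cast_nonneg]
    simp
  rw [one_div, ENNReal.ofReal_inv_of_pos (by positivity), hconst]
  refine (ENNReal.inv_mul_le_iff (by simp) (by finiteness)).2 ?_
  exact expWp_two_pow_le hp μ ν hν hstep k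

/-- **Corollary.** Let `(E, d_E)` be a separable metric space, `p ≥ 1` and
`μ ∈ 𝒫_p(E)`. Suppose `(μ^{(2^k)})_k` is a sequence of uniform quantizers
(each `μ^{(2^k)} = (1/2^k) ∑ δ_{x_i}` for some points `x_i ∈ E`) with
`W_p(μ^{(2n)}, μ) ≥ 2^{-1/(2p)} W_p(μ^{(n)}, μ)` for every `n` in
`J = {2^k : k ≥ 0}`. Then `W_p(μ^{(n)}, μ) ≥ (1/(5(1 + log₂ n))) 𝔼[W_p(μ_n, μ)]` for
all `n ∈ J`. (Here the sequence is indexed by the exponent `k`, so `n = 2^k` and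
`log₂ n = k`.) -/
theorem stmt_2 {E : Type*} [MetricSpace E] [TopologicalSpace.SeparableSpace E]
    [MeasurableSpace E] [BorelSpace E]
    (p : ℝ) (hp : 1 ≤ p)
    (μ : Measure E) [IsProbabilityMeasure μ] (hμ : HasFiniteMoment p μ)
    (ν : ℕ → Measure E)
    (hform : ∀ k : ℕ, ∃ x : Fin (2 ^ k) → E, ν k = empiricalMeasure (2 ^ k) x)
    (hdecay : ∀ k : ℕ,
      ENNReal.ofReal ((2 : ℝ) ^ (-(1 / (2 * p)))) * Wp p (ν k) μ ≤ Wp p (ν (k + 1)) μ) :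
    ∀ k : ℕ,
      ENNReal.ofReal (1 / (5 * (1 + (k : ℝ)))) * expWp p μ (2 ^ k) ≤ Wp p (ν k) μ := by
  choose x hx using hform
  have : ∀ k, IsProbabilityMeasure (ν k) := fun k => hx k ▸ inferInstance
  exact stmt_2_general p hp μ ν (fun k => hx k ▸ ae_mem_heavyAtoms_empiricalMeasure (x k)) hdecay
end

section
/- Let (E,d_E) be a separable metric space, let p ≥ 1 and let μ ∈ 𝒫_p(E) be supported on more than one point (i.e., μ is not a Dirac measure δ_x). Then max(−1/2, limsup_{n→∞} ln b_{n,p}(μ)/ln n) ≤ limsup_{n→∞} ln((𝔼[W_p(μ_n,μ)^p])^{1/p})/ln n ≤ max(−1/(2p), limsup_{n→∞} ln b_{n,p}(μ)/ln n), where μ_n is the empirical measure of μ with sample size n. -/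
open MeasureTheory ENNReal Filter

/-! Upper bound: glue near-optimal uniform quantizers with `2 ^ J, 2 ^ (J - 1), …, 1` atoms,
`2 ^ J ≤ n < 2 ^ (J + 1)`, into a chain of Markov kernels. Push both `μ` and `μ_n` down this chain.
At each scale only the mass on which the two images disagree has to be moved, and an atom of mass
`q ≥ 1 / N` deviates in mean by at most `√(q / n) ≤ √(N / n) * q`, so the scale with `N` atoms costs
at most `(N / n) ^ (1 / (2 * p))` times the quantization error at that scale. If the quantization
error is `O(n ^ a)` with `a ≥ -1 / (2 * p)`, each of the `J = O(log n)` terms is `O(n ^ a)`.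
The kernels come from disintegrating couplings that have a countably supported marginal, which is
possible outside standard Borel spaces as well.

Lower bound: `μ_n` is itself a uniform quantizer, and by the central limit theorem a bounded
Lipschitz function that is not `μ`-a.e. constant has fluctuations of order `1 / √n`. -/

section Wasserstein

open ProbabilityTheory

lemma exists_kernel_of_snd_countable {X Y : Type*} [MeasurableSpace X] [MeasurableSpace Y]
    [MeasurableSingletonClass Y] (γ : Measure (X × Y)) [IsFiniteMeasure γ] {S : Set Y}
    (hS : S.Countable) (hne : S.Nonempty) (hγ : γ.snd Sᶜ = 0) :
    ∃ κ : Kernel X Y, IsMarkovKernel κ ∧ (∀ x, κ x Sᶜ = 0) ∧ γ.fst ⊗ₘ κ = γ := by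
  have : Countable S := hS.to_subtype
  have : Nonempty S := hne.to_subtype
  let ι : X × S → X × Y := Prod.map id Subtype.val
  have hι : MeasurableEmbedding ι :=
    MeasurableEmbedding.id.prodMap (MeasurableEmbedding.subtype_coe hS.measurableSet)
  have hmap : (γ.comap ι).map ι = γ := by
    rw [hι.map_comap, Set.range_prodMap, Set.range_id, Subtype.range_val]
    refine Measure.restrict_eq_self_of_ae_mem ?_
    rw [Measure.snd_apply hS.measurableSet.compl] at hγ
    exact measure_mono_null (fun z hz hzS => hz ⟨trivial, hzS⟩) hγ
  let κ := (γ.comap ι).condKernel.map Subtype.val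
  have : IsMarkovKernel κ := Kernel.IsMarkovKernel.map _ measurable_subtype_coe
  have hκ : (γ.comap ι).fst ⊗ₘ κ = γ := by
    rw [Measure.compProd_map measurable_subtype_coe, Measure.disintegrate, hmap]
  refine ⟨κ, this, fun x => ?_, ?_⟩
  · rw [Kernel.map_apply' _ measurable_subtype_coe _ hS.measurableSet.compl]
    simp
  · rw [← hκ, Measure.fst_compProd, hκ]

lemma exists_probabilityMeasure_fiber {X Y : Type*} [MeasurableSpace X] [MeasurableSpace Y]
    [MeasurableSingletonClass X] [Nonempty Y] (γ : Measure (X × Y)) [IsFiniteMeasure γ] (x : X) :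
    ∃ ν : Measure Y, IsProbabilityMeasure ν ∧ ∀ s, MeasurableSet s →
      ν (Prod.mk x ⁻¹' s) * γ.fst {x} = γ (s ∩ Prod.fst ⁻¹' {x}) := by
  have hx := measurableSet_singleton x
  rw [Measure.fst_apply hx]
  by_cases h0 : γ (Prod.fst ⁻¹' {x}) = 0
  · inhabit Y
    refine ⟨Measure.dirac default, inferInstance, fun s _ => ?_⟩
    rw [h0, mul_zero, measure_mono_null Set.inter_subset_right h0]
  · have := cond_isProbabilityMeasure h0
    refine ⟨γ[|Prod.fst ⁻¹' {x}].snd, inferInstance, fun s hs => ?_⟩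
    rw [Measure.snd_apply (measurable_prodMk_left hs), cond_mul_eq_inter (measurable_fst hx)]
    congr 1
    ext ⟨a, b⟩
    simp only [Set.mem_inter_iff, Set.mem_preimage, Set.mem_singleton_iff]
    grind

lemma exists_kernel_of_fst_countable {X Y : Type*} [MeasurableSpace X] [MeasurableSpace Y]
    [MeasurableSingletonClass X] [Nonempty Y] (γ : Measure (X × Y)) [IsFiniteMeasure γ]
    {S : Set X} (hS : S.Countable) (hγ : γ.fst Sᶜ = 0) :
    ∃ κ : Kernel X Y, IsMarkovKernel κ ∧ γ.fst ⊗ₘ κ = γ := by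
  classical
  inhabit Y
  choose law hlaw hfiber using exists_probabilityMeasure_fiber γ
  let extend (x : X) : Measure Y := if x ∈ S then law x else Measure.dirac default
  have hextend : Measurable extend := by
    refine (measurable_const (a := Measure.dirac default)).measurable_of_countable_ne
      (hS.mono fun x hx => ?_)
    by_contra hxS
    exact hx (if_neg hxS).symm
  let κ : Kernel X Y := ⟨extend, hextend⟩
  have hκS (x : S) : κ x = law x := if_pos x.2
  have hκ : IsMarkovKernel κ := by
    refine ⟨fun x => ?_⟩
    change IsProbabilityMeasure (if x ∈ S then law x else Measure.dirac default)
    split_ifs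
    exacts [hlaw x, inferInstance]
  refine ⟨κ, hκ, Measure.ext fun s hs => ?_⟩
  have hγS : γ.restrict s (Prod.fst ⁻¹' S)ᶜ = 0 := by
    rw [Measure.fst_apply hS.measurableSet.compl] at hγ
    exact Measure.absolutelyContinuous_of_le Measure.restrict_le_self hγ
  calc (γ.fst ⊗ₘ κ) s = ∫⁻ x in S, κ x (Prod.mk x ⁻¹' s) ∂γ.fst := by
        rw [Measure.compProd_apply hs, Measure.restrict_eq_self_of_ae_mem hγ]
    _ = ∑' x : S, κ x (Prod.mk (x : X) ⁻¹' s) * γ.fst {(x : X)} := lintegral_countable _ hS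
    _ = ∑' x : S, γ.restrict s (Prod.fst ⁻¹' {(x : X)}) := by
        refine tsum_congr fun x => ?_
        rw [hκS, hfiber _ s hs, Set.inter_comm,
          Measure.restrict_apply (measurable_fst (measurableSet_singleton _))]
    _ = γ.restrict s (Prod.fst ⁻¹' S) := tsum_measure_preimage_singleton hS fun x _ =>
        measurable_fst (measurableSet_singleton x)
    _ = γ.restrict s Set.univ := measure_of_measure_compl_eq_zero hγS
    _ = γ s := Measure.restrict_apply_univ s

lemma comp_apply_eq_zero {X Y : Type*} [MeasurableSpace X] [MeasurableSpace Y] (μ : Measure X)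
    {κ : Kernel X Y} {s : Set Y} (hs : MeasurableSet s) (hκ : ∀ x, κ x s = 0) :
    (κ ∘ₘ μ) s = 0 := by
  simp [Measure.bind_apply hs κ.aemeasurable, hκ]

variable {E : Type*} [MetricSpace E] [MeasurableSpace E] {p : ℝ} {μ ν ρ : Measure E}

lemma Wp_fst_snd_le (p : ℝ) (γ : Measure (E × E)) :
    Wp p γ.fst γ.snd ≤ (∫⁻ z, edist z.1 z.2 ^ p ∂γ) ^ (1 / p) :=
  iInf₂_le γ ⟨rfl, rfl⟩

lemma exists_coupling_of_Wp_lt {r : ℝ≥0∞} (h : Wp p μ ν < r) :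
    ∃ γ : Measure (E × E), γ.fst = μ ∧ γ.snd = ν ∧ (∫⁻ z, edist z.1 z.2 ^ p ∂γ) ^ (1 / p) < r := by
  simpa [Wp, iInf_lt_iff, and_assoc, Measure.fst, Measure.snd] using h

lemma le_Wp_add {a c : ℝ≥0∞}
    (h : ∀ γ : Measure (E × E), γ.fst = μ → γ.snd = ν →
      a ≤ (∫⁻ z, edist z.1 z.2 ^ p ∂γ) ^ (1 / p) + c) :
    a ≤ Wp p μ ν + c := by
  simp only [Wp, ENNReal.iInf_add]
  exact le_iInf₂ fun γ hγ => h γ hγ.1 hγ.2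

lemma Wp_comm (p : ℝ) (μ ν : Measure E) : Wp p μ ν = Wp p ν μ := by
  have le_swap (μ ν : Measure E) : Wp p ν μ ≤ Wp p μ ν := by
    refine le_iInf₂ ?_
    rintro γ ⟨rfl, rfl⟩
    have h := Wp_fst_snd_le p (γ.map MeasurableEquiv.prodComm)
    rw [lintegral_map_equiv] at h
    change Wp p (γ.map Prod.swap).fst (γ.map Prod.swap).snd ≤ _ at h
    rw [Measure.fst_map_swap, Measure.snd_map_swap] at h
    simp only [MeasurableEquiv.prodComm, MeasurableEquiv.coe_mk, Equiv.prodComm_apply,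
      Prod.fst_swap, Prod.snd_swap, edist_comm] at h
    exact h
  exact le_antisymm (le_swap ν μ) (le_swap μ ν)

lemma Wp_add_right_le (hp : 0 < p) (μ ν ρ : Measure E) : Wp p (μ + ρ) (ν + ρ) ≤ Wp p μ ν := by
  refine le_iInf₂ ?_
  rintro γ ⟨rfl, rfl⟩
  let diag : E → E × E := fun x => (x, x)
  have hfst : (ρ.map diag).fst = ρ := (Measure.fst_map_prodMk measurable_id).trans Measure.map_id
  have hsnd : (ρ.map diag).snd = ρ := (Measure.snd_map_prodMk measurable_id).trans Measure.map_id
  have hcost : ∫⁻ z, edist z.1 z.2 ^ p ∂(ρ.map diag) = 0 := by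
    refine le_antisymm ((lintegral_map_le _ _).trans ?_) zero_le
    simp [diag, hp]
  have h := Wp_fst_snd_le p (γ + ρ.map diag)
  rwa [Measure.fst_add, Measure.snd_add, lintegral_add_measure, hcost, add_zero, hfst, hsnd] at h

lemma Wp_self (hp : 0 < p) (μ : Measure E) : Wp p μ μ = 0 := by
  have h0 : Wp p (0 : Measure E) 0 ≤ 0 := by simpa [hp] using Wp_fst_snd_le p (0 : Measure (E × E))
  simpa using (Wp_add_right_le hp 0 0 μ).trans h0

/-- The cost of moving the point `x` along the kernel `κ`: the mean of `d(x, ·)^p` under `κ x`. -/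
noncomputable def transportCost (p : ℝ) (κ : Kernel E E) (x : E) : ℝ≥0∞ :=
  ∫⁻ y, edist x y ^ p ∂κ x

section Transport

variable [SecondCountableTopology E] [OpensMeasurableSpace E] {κ : Kernel E E}

lemma measurable_transportCost (p : ℝ) (κ : Kernel E E) [IsSFiniteKernel κ] :
    Measurable (transportCost p κ) :=
  Measurable.lintegral_kernel_prod_right' (f := fun z : E × E => edist z.1 z.2 ^ p) (by fun_prop)

lemma lintegral_compProd_edist (p : ℝ) (μ : Measure E) [SFinite μ] (κ : Kernel E E)
    [IsSFiniteKernel κ] :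
    ∫⁻ z, edist z.1 z.2 ^ p ∂(μ ⊗ₘ κ) = ∫⁻ x, transportCost p κ x ∂μ :=
  Measure.lintegral_compProd (by fun_prop)

lemma Wp_comp_right_le (hp : 1 ≤ p) (μ ν : Measure E) [IsFiniteMeasure μ] (κ : Kernel E E)
    [IsMarkovKernel κ] :
    Wp p μ (κ ∘ₘ ν) ≤ Wp p μ ν + (∫⁻ x, transportCost p κ x ∂ν) ^ (1 / p) := by
  refine le_Wp_add ?_
  rintro γ rfl rfl
  have : IsFiniteMeasure γ := ⟨by rw [← Measure.fst_univ]; exact measure_lt_top _ _⟩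
  let T := γ ⊗ₘ κ.comap Prod.snd measurable_snd
  have hfst : T.map (fun w => w.1.1) = γ.fst := by
    rw [← Measure.fst_compProd γ (κ.comap Prod.snd measurable_snd), Measure.fst, Measure.fst,
      Measure.map_map measurable_fst measurable_fst]
    rfl
  have hsnd : T.map Prod.snd = κ ∘ₘ γ.snd := by
    change T.snd = _
    rw [Measure.snd_compProd, Measure.snd, ← Measure.deterministic_comp_eq_map measurable_snd,
      Measure.comp_assoc, Kernel.comp_deterministic_eq_comap]
  have hT : Wp p γ.fst (κ ∘ₘ γ.snd) ≤ (∫⁻ w, edist w.1.1 w.2 ^ p ∂T) ^ (1 / p) := by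
    have h := Wp_fst_snd_le p (T.map fun w => (w.1.1, w.2))
    rwa [Measure.fst_map_prodMk (by fun_prop), Measure.snd_map_prodMk (by fun_prop),
      lintegral_map (by fun_prop) (by fun_prop), hfst, hsnd] at h
  calc Wp p γ.fst (κ ∘ₘ γ.snd)
      ≤ (∫⁻ w, (edist w.1.1 w.1.2 + edist w.1.2 w.2) ^ p ∂T) ^ (1 / p) := by
        refine hT.trans ?_
        gcongr
        exact edist_triangle _ _ _
    _ ≤ (∫⁻ w, edist w.1.1 w.1.2 ^ p ∂T) ^ (1 / p) + (∫⁻ w, edist w.1.2 w.2 ^ p ∂T) ^ (1 / p) :=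
        ENNReal.lintegral_Lp_add_le (by fun_prop) (by fun_prop) hp
    _ = (∫⁻ z, edist z.1 z.2 ^ p ∂γ) ^ (1 / p) +
          (∫⁻ x, transportCost p κ x ∂γ.snd) ^ (1 / p) := by
        congr 2
        · rw [Measure.lintegral_compProd (by fun_prop)]
          simp
        · rw [Measure.lintegral_compProd (by fun_prop), Measure.snd,
            lintegral_map (measurable_transportCost p κ) measurable_snd]
          rfl

lemma Wp_comp_le (hp : 1 ≤ p) (μ : Measure E) [IsFiniteMeasure μ] (κ : Kernel E E)
    [IsMarkovKernel κ] :
    Wp p μ (κ ∘ₘ μ) ≤ (∫⁻ x, transportCost p κ x ∂μ) ^ (1 / p) := by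
  simpa [Wp_self (zero_lt_one.trans_le hp)] using Wp_comp_right_le hp μ μ κ

lemma Wp_snd_le_of_compProd_eq (hp : 1 ≤ p) (μ : Measure E) [IsFiniteMeasure μ]
    {γ : Measure (E × E)} [IsFiniteMeasure γ] {κ : Kernel E E} [IsMarkovKernel κ]
    (hκ : γ.fst ⊗ₘ κ = γ) :
    Wp p μ γ.snd ≤ Wp p μ γ.fst + (∫⁻ z, edist z.1 z.2 ^ p ∂γ) ^ (1 / p) := by
  have h := Wp_comp_right_le hp μ γ.fst κ
  rwa [← Measure.snd_compProd, ← lintegral_compProd_edist, hκ] at h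

lemma Wp_triangle_of_right_countable (hp : 1 ≤ p) (μ ν : Measure E) {ρ : Measure E}
    [IsFiniteMeasure μ] [IsFiniteMeasure ν] {S : Set E} (hS : S.Countable) (hne : S.Nonempty)
    (hρ : ρ Sᶜ = 0) : Wp p μ ρ ≤ Wp p μ ν + Wp p ν ρ := by
  rw [add_comm]
  refine le_Wp_add ?_
  rintro γ rfl rfl
  have : IsFiniteMeasure γ := ⟨by rw [← Measure.fst_univ]; exact measure_lt_top _ _⟩
  obtain ⟨κ, hκ, -, hdis⟩ := exists_kernel_of_snd_countable γ hS hne hρ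
  rw [add_comm]
  exact Wp_snd_le_of_compProd_eq hp μ hdis

lemma Wp_triangle_of_middle_countable (hp : 1 ≤ p) (μ : Measure E) {ν : Measure E}
    (ρ : Measure E) [IsFiniteMeasure μ] [IsFiniteMeasure ν] {S : Set E} (hS : S.Countable)
    (hν : ν Sᶜ = 0) : Wp p μ ρ ≤ Wp p μ ν + Wp p ν ρ := by
  rcases isEmpty_or_nonempty E with hE | hE
  · rw [Subsingleton.elim ρ ν]
    exact le_self_add
  rw [add_comm]
  refine le_Wp_add ?_
  rintro γ rfl rfl
  have : IsFiniteMeasure γ := ⟨by rw [← Measure.fst_univ]; exact measure_lt_top _ _⟩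
  obtain ⟨κ, hκ, hdis⟩ := exists_kernel_of_fst_countable γ hS hν
  rw [add_comm]
  exact Wp_snd_le_of_compProd_eq hp μ hdis

lemma Wp_le_comp_comp (hp : 1 ≤ p) (μ ν : Measure E) [IsFiniteMeasure μ] [IsFiniteMeasure ν]
    (κ : Kernel E E) [IsMarkovKernel κ] {S : Set E} (hS : S.Countable) (hκ : ∀ x, κ x Sᶜ = 0) :
    Wp p μ ν ≤ (∫⁻ x, transportCost p κ x ∂μ) ^ (1 / p) +
      (∫⁻ x, transportCost p κ x ∂ν) ^ (1 / p) + Wp p (κ ∘ₘ μ) (κ ∘ₘ ν) := by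
  have hnull (ρ : Measure E) : (κ ∘ₘ ρ) Sᶜ = 0 := comp_apply_eq_zero ρ hS.measurableSet.compl hκ
  calc Wp p μ ν ≤ Wp p μ (κ ∘ₘ μ) + Wp p (κ ∘ₘ μ) ν :=
        Wp_triangle_of_middle_countable hp μ ν hS (hnull μ)
    _ ≤ Wp p μ (κ ∘ₘ μ) + (Wp p (κ ∘ₘ μ) (κ ∘ₘ ν) + Wp p ν (κ ∘ₘ ν)) := by
        rw [Wp_comm p ν]
        gcongr
        exact Wp_triangle_of_middle_countable hp _ ν hS (hnull ν)
    _ ≤ _ := by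
        rw [add_comm (Wp p (κ ∘ₘ μ) (κ ∘ₘ ν)), ← add_assoc]
        gcongr
        · exact Wp_comp_le hp μ κ
        · exact Wp_comp_le hp ν κ

lemma exists_kernel_of_Wp_lt {μ ν : Measure E} [IsFiniteMeasure μ]
    {S : Set E} (hS : S.Countable) (hne : S.Nonempty) (hν : ν Sᶜ = 0) {B : ℝ≥0∞}
    (hB : Wp p μ ν < B) :
    ∃ κ : Kernel E E, IsMarkovKernel κ ∧ (∀ x, κ x Sᶜ = 0) ∧ κ ∘ₘ μ = ν ∧
      (∫⁻ x, transportCost p κ x ∂μ) ^ (1 / p) ≤ B := by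
  obtain ⟨γ, rfl, rfl, hγ⟩ := exists_coupling_of_Wp_lt hB
  have : IsFiniteMeasure γ := ⟨by rw [← Measure.fst_univ]; exact measure_lt_top _ _⟩
  obtain ⟨κ, hκ, hκS, hdis⟩ := exists_kernel_of_snd_countable γ hS hne hν
  refine ⟨κ, hκ, hκS, ?_, ?_⟩
  · rw [← Measure.snd_compProd, hdis]
  · rw [← lintegral_compProd_edist, hdis]
    exact hγ.le

end Transport

end Wasserstein

section Chaining

open ProbabilityTheory

/-- The part of the measure `a` left after removing the mass it has in common with `b`; in a
transport from `a` to `b` it is all that has to move. -/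
noncomputable def massExcess {E : Type*} [MeasurableSpace E] (a b : Measure E) : Measure E :=
  a - a ⊓ b

section MassExcess

variable {E : Type*} [MeasurableSpace E]

lemma massExcess_le (a b : Measure E) : massExcess a b ≤ a := Measure.sub_le

lemma massExcess_add_inf (a b : Measure E) [IsFiniteMeasure a] : massExcess a b + a ⊓ b = a :=
  have := isFiniteMeasure_of_le a (inf_le_left : a ⊓ b ≤ a)
  Measure.sub_add_cancel_of_le inf_le_left

lemma massExcess_self (a : Measure E) : massExcess a a = 0 := by
  simp [massExcess, Measure.sub_self]

instance (a b : Measure E) [IsFiniteMeasure a] : IsFiniteMeasure (massExcess a b) :=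
  isFiniteMeasure_of_le a (massExcess_le a b)

end MassExcess

variable {E : Type*} [MetricSpace E] [MeasurableSpace E] {p : ℝ}

lemma Wp_le_Wp_massExcess (hp : 0 < p) {α β c a b : Measure E} [IsFiniteMeasure a]
    [IsFiniteMeasure b] (ha : α + c = a) (hb : β + c = b) :
    Wp p α β ≤ Wp p (massExcess a b) (massExcess b a) := by
  have hc : c ≤ a ⊓ b := le_inf (ha ▸ Measure.le_add_left le_rfl) (hb ▸ Measure.le_add_left le_rfl)
  have : IsFiniteMeasure c := isFiniteMeasure_of_le a (hc.trans inf_le_left)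
  have hcommon : a ⊓ b - c + c = a ⊓ b := Measure.sub_add_cancel_of_le hc
  have split_off {α a b : Measure E} [IsFiniteMeasure a] (h : α + c = a)
      (hcommon : a ⊓ b - c + c = a ⊓ b) : α = massExcess a b + (a ⊓ b - c) := by
    rw [← Measure.add_sub_cancel (μ := α) (ν := c), h]
    conv_lhs => rw [← massExcess_add_inf a b, ← hcommon, ← add_assoc, Measure.add_sub_cancel]
  rw [split_off ha hcommon, split_off hb (inf_comm a b ▸ hcommon), inf_comm b a]
  exact Wp_add_right_le hp _ _ _

variable [SecondCountableTopology E] [OpensMeasurableSpace E]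

lemma Wp_massExcess_le_comp (hp : 1 ≤ p) (a b : Measure E) [IsFiniteMeasure a]
    [IsFiniteMeasure b] (κ : Kernel E E) [IsMarkovKernel κ] {S : Set E} (hS : S.Countable)
    (hκ : ∀ x, κ x Sᶜ = 0) :
    Wp p (massExcess a b) (massExcess b a) ≤
      (∫⁻ x, transportCost p κ x ∂massExcess a b) ^ (1 / p) +
      (∫⁻ x, transportCost p κ x ∂massExcess b a) ^ (1 / p) +
      Wp p (massExcess (κ ∘ₘ a) (κ ∘ₘ b)) (massExcess (κ ∘ₘ b) (κ ∘ₘ a)) := by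
  have ha : κ ∘ₘ massExcess a b + κ ∘ₘ (a ⊓ b) = κ ∘ₘ a := by
    rw [← Measure.comp_add, massExcess_add_inf]
  have hb : κ ∘ₘ massExcess b a + κ ∘ₘ (a ⊓ b) = κ ∘ₘ b := by
    rw [← Measure.comp_add, inf_comm, massExcess_add_inf]
  refine (Wp_le_comp_comp hp _ _ κ hS hκ).trans ?_
  gcongr
  exact Wp_le_Wp_massExcess (zero_lt_one.trans_le hp) ha hb

lemma Wp_le_sum_massExcess (hp : 1 ≤ p) {a b : ℕ → Measure E} [∀ i, IsFiniteMeasure (a i)]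
    [∀ i, IsFiniteMeasure (b i)] {P : ℕ → Kernel E E} [∀ i, IsMarkovKernel (P i)]
    (ha : ∀ i, P i ∘ₘ a i = a (i + 1)) (hb : ∀ i, P i ∘ₘ b i = b (i + 1))
    {S : ℕ → Set E} (hS : ∀ i, (S i).Countable) (hP : ∀ i x, P i x (S i)ᶜ = 0) {k : ℕ}
    (hk : a k = b k) :
    Wp p (a 0) (b 0) ≤ ∑ i ∈ Finset.range k,
      ((∫⁻ x, transportCost p (P i) x ∂massExcess (a i) (b i)) ^ (1 / p) +
        (∫⁻ x, transportCost p (P i) x ∂massExcess (b i) (a i)) ^ (1 / p)) := by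
  have telescope (j : ℕ) : Wp p (a 0) (b 0) ≤ ∑ i ∈ Finset.range j,
      ((∫⁻ x, transportCost p (P i) x ∂massExcess (a i) (b i)) ^ (1 / p) +
        (∫⁻ x, transportCost p (P i) x ∂massExcess (b i) (a i)) ^ (1 / p)) +
      Wp p (massExcess (a j) (b j)) (massExcess (b j) (a j)) := by
    induction j with
    | zero =>
      simpa using Wp_le_Wp_massExcess (zero_lt_one.trans_le hp) (add_zero (a 0)) (add_zero (b 0))
    | succ j ih =>
      rw [Finset.sum_range_succ, add_assoc]
      refine ih.trans ?_
      gcongr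
      have h := Wp_massExcess_le_comp hp (a j) (b j) (P j) (hS j) (hP j)
      rwa [ha, hb] at h
  simpa [hk, massExcess_self, Wp_self (zero_lt_one.trans_le hp)] using telescope k

end Chaining

section Discrepancy

variable {E : Type*} [MeasurableSpace E]

lemma min_smul_dirac_le_inf (a b : Measure E) (z : E) :
    min (a {z}) (b {z}) • Measure.dirac z ≤ a ⊓ b := by
  have smul_dirac_le (a : Measure E) {m : ℝ≥0∞} (hm : m ≤ a {z}) : m • Measure.dirac z ≤ a :=
    calc m • Measure.dirac z ≤ a {z} • Measure.dirac z := by gcongr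
      _ = a.restrict {z} := (Measure.restrict_singleton a z).symm
      _ ≤ a := Measure.restrict_le_self
  exact le_inf (smul_dirac_le a (min_le_left _ _)) (smul_dirac_le b (min_le_right _ _))

lemma massExcess_singleton_le [MeasurableSingletonClass E] (a b : Measure E) [IsFiniteMeasure a]
    [IsFiniteMeasure b] (z : E) :
    massExcess a b {z} ≤ ENNReal.ofReal |a.real {z} - b.real {z}| := by
  have : IsFiniteMeasure (a ⊓ b) := isFiniteMeasure_of_le a inf_le_left
  have hmin : min (a {z}) (b {z}) ≤ (a ⊓ b) {z} := by
    simpa using min_smul_dirac_le_inf a b z {z}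
  calc massExcess a b {z} = a {z} - (a ⊓ b) {z} :=
        Measure.sub_apply (measurableSet_singleton z) inf_le_left
    _ ≤ a {z} - min (a {z}) (b {z}) := by gcongr
    _ = a {z} - b {z} := tsub_min
    _ = ENNReal.ofReal (a.real {z} - b.real {z}) := by
        rw [ENNReal.ofReal_sub _ measureReal_nonneg, ofReal_measureReal, ofReal_measureReal]
    _ ≤ ENNReal.ofReal |a.real {z} - b.real {z}| := by gcongr; exact le_abs_self _

/-- The difference of the masses that `a` and `b` give to the points of `S`, summed with
weight `c`: for `c` a transport cost, this bounds the cost of moving the excess mass. -/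
noncomputable def discrepancy (c : E → ℝ≥0∞) (S : Finset E) (a b : Measure E) : ℝ≥0∞ :=
  ∑ z ∈ S, c z * ENNReal.ofReal |a.real {z} - b.real {z}|

lemma discrepancy_comm (c : E → ℝ≥0∞) (S : Finset E) (a b : Measure E) :
    discrepancy c S a b = discrepancy c S b a := by
  simp only [discrepancy, abs_sub_comm]

lemma lintegral_massExcess_le_discrepancy [MeasurableSingletonClass E] (c : E → ℝ≥0∞)
    {S : Finset E} {a : Measure E} (b : Measure E) [IsFiniteMeasure a] [IsFiniteMeasure b]
    (ha : a (S : Set E)ᶜ = 0) :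
    ∫⁻ x, c x ∂massExcess a b ≤ discrepancy c S a b := by
  have hS : massExcess a b (S : Set E)ᶜ = 0 :=
    le_antisymm ((massExcess_le a b _).trans ha.le) zero_le
  rw [← Measure.restrict_eq_self_of_ae_mem (s := (S : Set E)) hS, lintegral_finset]
  exact Finset.sum_le_sum fun z _ => by gcongr; exact massExcess_singleton_le a b z

end Discrepancy

section SampleMean

open ProbabilityTheory

variable {Ω : Type*} [MeasurableSpace Ω] {μ : Measure Ω} [IsProbabilityMeasure μ] {n : ℕ}

instance : IsProbabilityMeasure (sampleMeasure μ n) := by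
  unfold sampleMeasure
  infer_instance

lemma lintegral_abs_sub_mean_le {X : Ω → ℝ} (hX : MemLp X 2 μ) :
    ∫⁻ ω, ENNReal.ofReal |X ω - μ[X]| ∂μ ≤ ENNReal.ofReal √Var[X; μ] := by
  have hL2 : MemLp (fun ω => X ω - μ[X]) 2 μ := hX.sub (memLp_const _)
  calc ∫⁻ ω, ENNReal.ofReal |X ω - μ[X]| ∂μ = eLpNorm (fun ω => X ω - μ[X]) 1 μ := by
        simp [eLpNorm_one_eq_lintegral_enorm, Real.enorm_eq_ofReal_abs]
    _ ≤ eLpNorm (fun ω => X ω - μ[X]) 2 μ :=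
        eLpNorm_le_eLpNorm_of_exponent_le one_le_two hL2.aestronglyMeasurable
    _ = ENNReal.ofReal √Var[X; μ] := by
        rw [eLpNorm_eq_lintegral_rpow_enorm_toReal two_ne_zero ofNat_ne_top, Real.sqrt_eq_rpow,
          ← ENNReal.ofReal_rpow_of_nonneg (variance_nonneg X μ) (by norm_num), ofReal_variance hX]
        simp [evariance]

lemma variance_le_integral_of_mem_Icc {f : Ω → ℝ} (hf : Measurable f)
    (h01 : ∀ x, f x ∈ Set.Icc 0 1) : Var[f; μ] ≤ μ[f] := by
  have hint : Integrable f μ :=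
    (memLp_of_bounded (.of_forall h01) hf.aestronglyMeasurable 1).integrable le_rfl
  refine (variance_le_expectation_sq hf.aestronglyMeasurable).trans
    (integral_mono_of_nonneg (.of_forall fun x => sq_nonneg (f x)) hint (.of_forall fun x => ?_))
  exact pow_le_of_le_one (h01 x).1 (h01 x).2 two_ne_zero

lemma memLp_comp_eval {q : ℝ≥0∞} {f : Ω → ℝ} (hf : MemLp f q μ) (i : Fin n) :
    MemLp (fun X => f (X i)) q (sampleMeasure μ n) :=
  hf.comp_measurePreserving (measurePreserving_eval (fun _ => μ) i)

lemma integral_sampleMean (hn : n ≠ 0) {f : Ω → ℝ} (hf : Integrable f μ) :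
    ∫ X, (n : ℝ)⁻¹ * ∑ i, f (X i) ∂sampleMeasure μ n = μ[f] := by
  have hmean (i : Fin n) : ∫ X, f (X i) ∂sampleMeasure μ n = μ[f] :=
    integral_comp_eval (μ := fun _ => μ) hf.aestronglyMeasurable
  rw [integral_const_mul, integral_finsetSum _ fun i _ =>
    memLp_one_iff_integrable.1 (memLp_comp_eval (memLp_one_iff_integrable.2 hf) i)]
  simp [hmean, hn]

lemma variance_sampleMean {f : Ω → ℝ} (hf : MemLp f 2 μ) :
    Var[fun X => (n : ℝ)⁻¹ * ∑ i, f (X i); sampleMeasure μ n] = Var[f; μ] / n := by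
  have hsum : Var[fun X => ∑ i, f (X i); sampleMeasure μ n] = n * Var[f; μ] := by
    have h := variance_sum_pi (μ := fun _ : Fin n => μ) (X := fun _ => f) fun _ => hf
    rw [Finset.sum_const, Finset.card_univ, Fintype.card_fin, nsmul_eq_mul] at h
    rw [← h, sampleMeasure]
    congr 1
    ext X
    simp
  rw [variance_const_mul, hsum]
  rcases eq_or_ne n 0 with rfl | hn
  · simp
  · field_simp

lemma lintegral_abs_sampleMean_sub_le (hn : n ≠ 0) {f : Ω → ℝ} (hf : Measurable f)
    (h01 : ∀ x, f x ∈ Set.Icc 0 1) :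
    ∫⁻ X, ENNReal.ofReal |(n : ℝ)⁻¹ * ∑ i, f (X i) - μ[f]| ∂sampleMeasure μ n ≤
      ENNReal.ofReal √(μ[f] / n) := by
  have hL2 : MemLp f 2 μ := memLp_of_bounded (.of_forall h01) hf.aestronglyMeasurable 2
  have hmean : MemLp (fun X => (n : ℝ)⁻¹ * ∑ i, f (X i)) 2 (sampleMeasure μ n) :=
    (memLp_finsetSum _ fun i _ => memLp_comp_eval hL2 i).const_mul _
  have h := lintegral_abs_sub_mean_le hmean
  rw [integral_sampleMean hn (hL2.integrable one_le_two), variance_sampleMean hL2] at h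
  refine h.trans ?_
  gcongr
  exact variance_le_integral_of_mem_Icc hf h01

end SampleMean

section EmpiricalMeasure

open ProbabilityTheory

variable {E : Type*} [MeasurableSpace E] {n : ℕ}

lemma empiricalMeasure_apply_univ (hn : n ≠ 0) (X : Fin n → E) :
    empiricalMeasure n X Set.univ = 1 := by
  simp [empiricalMeasure, ENNReal.inv_mul_cancel, hn]

lemma isProbabilityMeasure_empiricalMeasure (hn : n ≠ 0) (X : Fin n → E) :
    IsProbabilityMeasure (empiricalMeasure n X) :=
  ⟨empiricalMeasure_apply_univ hn X⟩

lemma empiricalMeasure_const (hn : n ≠ 0) (x : E) :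
    empiricalMeasure n (fun _ => x) = Measure.dirac x := by
  rw [empiricalMeasure, Finset.sum_const, Finset.card_univ, Fintype.card_fin,
    ← Nat.cast_smul_eq_nsmul ℝ≥0∞, smul_smul,
    ENNReal.inv_mul_cancel (Nat.cast_ne_zero.2 hn) (ENNReal.natCast_ne_top n), one_smul]

lemma empiricalMeasure_compl_image [MeasurableSingletonClass E] [DecidableEq E] (x : Fin n → E) :
    empiricalMeasure n x (Finset.univ.image x : Set E)ᶜ = 0 := by
  simp [empiricalMeasure]

lemma inv_le_empiricalMeasure_real_singleton [MeasurableSingletonClass E] (x : Fin n → E)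
    (i : Fin n) : (n : ℝ)⁻¹ ≤ (empiricalMeasure n x).real {x i} := by
  have hle : (n : ℝ≥0∞)⁻¹ ≤ empiricalMeasure n x {x i} := by
    simp only [empiricalMeasure, Measure.smul_apply, Measure.finsetSum_apply, smul_eq_mul]
    refine le_mul_of_one_le_right' ?_
    exact (by simp : (1 : ℝ≥0∞) ≤ Measure.dirac (x i) {x i}).trans
      (Finset.single_le_sum (f := fun j => Measure.dirac (x j) {x i}) (by simp) (Finset.mem_univ i))
  have := isProbabilityMeasure_empiricalMeasure i.pos.ne' x
  simpa [measureReal_def] using ENNReal.toReal_mono (measure_ne_top _ _) hle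

lemma lintegral_empiricalMeasure (X : Fin n → E) {f : E → ℝ≥0∞} (hf : Measurable f) :
    ∫⁻ x, f x ∂empiricalMeasure n X = (n : ℝ≥0∞)⁻¹ * ∑ i, f (X i) := by
  simp [empiricalMeasure, lintegral_dirac' _ hf]

lemma integral_empiricalMeasure (X : Fin n → E) {f : E → ℝ} (hf : Measurable f) :
    ∫ x, f x ∂empiricalMeasure n X = (n : ℝ)⁻¹ * ∑ i, f (X i) := by
  rw [empiricalMeasure, integral_smul_measure, integral_finsetSum_measure fun i _ =>
    integrable_dirac' hf.stronglyMeasurable enorm_lt_top]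
  simp [integral_dirac' _ _ hf.stronglyMeasurable]

lemma lintegral_lintegral_empiricalMeasure (hn : n ≠ 0) (μ : Measure E) [IsProbabilityMeasure μ]
    {f : E → ℝ≥0∞} (hf : Measurable f) :
    ∫⁻ X, ∫⁻ x, f x ∂empiricalMeasure n X ∂sampleMeasure μ n = ∫⁻ x, f x ∂μ := by
  have heval (i : Fin n) : ∫⁻ X, f (X i) ∂sampleMeasure μ n = ∫⁻ x, f x ∂μ :=
    (measurePreserving_eval (fun _ => μ) i).lintegral_comp hf
  simp_rw [lintegral_empiricalMeasure _ hf]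
  rw [lintegral_const_mul _ (by fun_prop), lintegral_finsetSum _ fun i _ => by fun_prop]
  simp only [heval, Finset.sum_const, Finset.card_univ, Fintype.card_fin, nsmul_eq_mul]
  rw [← mul_assoc, ENNReal.inv_mul_cancel (by simpa) (natCast_ne_top n), one_mul]

variable {F : Type*} [MeasurableSpace F]

lemma comp_real_apply (μ : Measure E) (κ : Kernel E F) [IsFiniteKernel κ] {s : Set F}
    (hs : MeasurableSet s) : (κ ∘ₘ μ).real s = ∫ x, (κ x).real s ∂μ := by
  rw [measureReal_def, Measure.bind_apply hs κ.aemeasurable, ← integral_toReal]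
  · rfl
  · exact (κ.measurable_coe hs).aemeasurable
  · exact .of_forall fun x => measure_lt_top _ _

lemma comp_empiricalMeasure_real_apply (κ : Kernel E F) [IsMarkovKernel κ] (X : Fin n → E)
    {s : Set F} (hs : MeasurableSet s) :
    (κ ∘ₘ empiricalMeasure n X).real s = (n : ℝ)⁻¹ * ∑ i, (κ (X i)).real s := by
  rw [measureReal_def, Measure.bind_apply hs κ.aemeasurable,
    lintegral_empiricalMeasure _ (κ.measurable_coe hs), toReal_mul, toReal_sum]
  · simp [measureReal_def]
  · simp

lemma measurable_kernel_real (κ : Kernel E F) {s : Set F} (hs : MeasurableSet s) :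
    Measurable fun x => (κ x).real s :=
  (κ.measurable_coe hs).ennreal_toReal

variable [MeasurableSingletonClass F]

lemma measurable_ofReal_abs_comp_empiricalMeasure_sub (κ : Kernel E F) [IsMarkovKernel κ]
    (z : F) (q : ℝ) :
    Measurable fun X : Fin n → E =>
      ENNReal.ofReal |(κ ∘ₘ empiricalMeasure n X).real {z} - q| := by
  have hκ := measurable_kernel_real κ (measurableSet_singleton z)
  simp only [comp_empiricalMeasure_real_apply κ _ (measurableSet_singleton _)]
  have hsum : Measurable fun X : Fin n → E => ∑ i, (κ (X i)).real {z} :=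
    Finset.measurable_fun_sum _ fun i _ => hκ.comp (measurable_pi_apply i)
  exact ((hsum.const_mul _).sub_const q).norm.ennreal_ofReal

lemma measurable_discrepancy_comp_empiricalMeasure (c : F → ℝ≥0∞) (S : Finset F)
    (κ : Kernel E F) [IsMarkovKernel κ] (b : Measure F) :
    Measurable fun X : Fin n → E => discrepancy c S (κ ∘ₘ empiricalMeasure n X) b :=
  Finset.measurable_fun_sum _ fun z _ =>
    (measurable_ofReal_abs_comp_empiricalMeasure_sub κ z _).const_mul _

lemma lintegral_abs_comp_empiricalMeasure_sub_le (hn : n ≠ 0) (μ : Measure E)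
    [IsProbabilityMeasure μ] (κ : Kernel E F) [IsMarkovKernel κ] (z : F) :
    ∫⁻ X, ENNReal.ofReal |(κ ∘ₘ empiricalMeasure n X).real {z} - (κ ∘ₘ μ).real {z}|
      ∂sampleMeasure μ n ≤ ENNReal.ofReal √((κ ∘ₘ μ).real {z} / n) := by
  simp only [comp_empiricalMeasure_real_apply κ _ (measurableSet_singleton _),
    comp_real_apply μ κ (measurableSet_singleton z)]
  exact lintegral_abs_sampleMean_sub_le hn (f := fun x => (κ x).real {z})
    (measurable_kernel_real κ (measurableSet_singleton z))
    fun x => ⟨measureReal_nonneg, measureReal_le_one⟩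

lemma sqrt_div_le_sqrt_div_mul {N q : ℝ} (hN : 0 < N) (hq : N⁻¹ ≤ q) (r : ℝ) :
    √(q / r) ≤ √(N / r) * q := by
  have hq0 : 0 < q := (inv_pos.2 hN).trans_le hq
  rw [Real.sqrt_div hq0.le, Real.sqrt_div hN.le, div_mul_eq_mul_div]
  gcongr
  rw [Real.sqrt_le_left (by positivity), mul_pow, Real.sq_sqrt hN.le]
  nlinarith [(inv_le_iff_one_le_mul₀' hN).1 hq]

lemma lintegral_discrepancy_comp_empiricalMeasure_le (hn : n ≠ 0) (μ : Measure E)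
    [IsProbabilityMeasure μ] (κ : Kernel E F) [IsMarkovKernel κ] (c : F → ℝ≥0∞) {S : Finset F}
    {N : ℝ} (hN : 0 < N) (hS : ∀ z ∈ S, N⁻¹ ≤ (κ ∘ₘ μ).real {z}) :
    ∫⁻ X, discrepancy c S (κ ∘ₘ empiricalMeasure n X) (κ ∘ₘ μ) ∂sampleMeasure μ n ≤
      ENNReal.ofReal √(N / n) * ∫⁻ z, c z ∂(κ ∘ₘ μ) := by
  have hdev (z : F) (hz : z ∈ S) :
      ∫⁻ X, ENNReal.ofReal |(κ ∘ₘ empiricalMeasure n X).real {z} - (κ ∘ₘ μ).real {z}|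
        ∂sampleMeasure μ n ≤ ENNReal.ofReal √(N / n) * (κ ∘ₘ μ) {z} := by
    rw [← ofReal_measureReal, ← ENNReal.ofReal_mul (Real.sqrt_nonneg _)]
    exact (lintegral_abs_comp_empiricalMeasure_sub_le hn μ κ z).trans
      (ENNReal.ofReal_le_ofReal (sqrt_div_le_sqrt_div_mul hN (hS z hz) n))
  have hmeas (z : F) := measurable_ofReal_abs_comp_empiricalMeasure_sub (n := n) κ z
    ((κ ∘ₘ μ).real {z})
  calc ∫⁻ X, discrepancy c S (κ ∘ₘ empiricalMeasure n X) (κ ∘ₘ μ) ∂sampleMeasure μ n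
      = ∑ z ∈ S, c z * ∫⁻ X, ENNReal.ofReal
          |(κ ∘ₘ empiricalMeasure n X).real {z} - (κ ∘ₘ μ).real {z}| ∂sampleMeasure μ n := by
        simp only [discrepancy]
        rw [lintegral_finsetSum _ fun z _ => (hmeas z).const_mul _]
        simp_rw [lintegral_const_mul _ (hmeas _)]
    _ ≤ ∑ z ∈ S, c z * (ENNReal.ofReal √(N / n) * (κ ∘ₘ μ) {z}) :=
        Finset.sum_le_sum fun z hz => by gcongr; exact hdev z hz
    _ = ENNReal.ofReal √(N / n) * ∫⁻ z in S, c z ∂(κ ∘ₘ μ) := by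
        simp only [lintegral_finset, Finset.mul_sum, mul_left_comm]
    _ ≤ ENNReal.ofReal √(N / n) * ∫⁻ z, c z ∂(κ ∘ₘ μ) := by
        gcongr
        exact Measure.restrict_le_self

end EmpiricalMeasure

section KernelChain

open ProbabilityTheory

lemma lintegral_const_mul_rpow_rpow {Ω : Type*} [MeasurableSpace Ω] (P : Measure Ω) {p : ℝ}
    (hp : 0 < p) (a : ℝ≥0∞) {f : Ω → ℝ≥0∞} (hf : Measurable f) :
    (∫⁻ ω, (a * f ω ^ (1 / p)) ^ p ∂P) ^ (1 / p) = a * (∫⁻ ω, f ω ∂P) ^ (1 / p) := by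
  have hpow (ω : Ω) : (a * f ω ^ (1 / p)) ^ p = a ^ p * f ω := by
    rw [ENNReal.mul_rpow_of_nonneg _ _ hp.le, one_div, ENNReal.rpow_inv_rpow hp.ne']
  simp only [hpow]
  rw [lintegral_const_mul _ hf, ENNReal.mul_rpow_of_nonneg _ _ (by positivity), one_div,
    ENNReal.rpow_rpow_inv hp.ne']

lemma lintegral_const_add_sum_rpow_le {Ω ι : Type*} [MeasurableSpace Ω] (P : Measure Ω)
    [IsProbabilityMeasure P] {p : ℝ} (hp : 1 ≤ p) (c : ℝ≥0∞) (s : Finset ι) (a : ι → ℝ≥0∞)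
    {f : ι → Ω → ℝ≥0∞} (hf : ∀ i, Measurable (f i)) :
    (∫⁻ ω, (c + ∑ i ∈ s, a i * f i ω ^ (1 / p)) ^ p ∂P) ^ (1 / p) ≤
      c + ∑ i ∈ s, a i * (∫⁻ ω, f i ω ∂P) ^ (1 / p) := by
  classical
  have hp0 : 0 < p := zero_lt_one.trans_le hp
  induction s using Finset.induction_on with
  | empty => simp [ENNReal.rpow_rpow_inv hp0.ne']
  | insert i s hi ih =>
    simp only [Finset.sum_insert hi, add_left_comm c]
    refine (ENNReal.lintegral_Lp_add_le (by fun_prop) (by fun_prop) hp).trans ?_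
    rw [lintegral_const_mul_rpow_rpow P hp0 _ (hf i)]
    gcongr

lemma comp_eq_dirac {X Y : Type*} [MeasurableSpace X] [MeasurableSpace Y]
    [MeasurableSingletonClass Y] (μ : Measure X) [IsProbabilityMeasure μ] {κ : Kernel X Y}
    [IsMarkovKernel κ] {z : Y} (hκ : ∀ x, κ x {z}ᶜ = 0) : κ ∘ₘ μ = Measure.dirac z := by
  have hz := (measurableSet_singleton z).compl
  have hnull := comp_apply_eq_zero μ hz hκ
  rw [← Measure.restrict_eq_self_of_ae_mem (s := {z}) hnull, Measure.restrict_singleton,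
    (prob_compl_eq_zero_iff (measurableSet_singleton z)).1 hnull, one_smul]

/-- The composition `P (i - 1) ∘ₖ ⋯ ∘ₖ P 0 ∘ₖ κ₀`, moving mass along `κ₀` and then along the
first `i` kernels of the sequence `P`. -/
noncomputable def chainKernel {E : Type*} [MeasurableSpace E] (κ₀ : Kernel E E)
    (P : ℕ → Kernel E E) : ℕ → Kernel E E
  | 0 => κ₀
  | i + 1 => P i ∘ₖ chainKernel κ₀ P i

section Measurable

variable {E : Type*} [MeasurableSpace E] {κ₀ : Kernel E E} {P : ℕ → Kernel E E}

instance [IsMarkovKernel κ₀] [∀ i, IsMarkovKernel (P i)] (i : ℕ) :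
    IsMarkovKernel (chainKernel κ₀ P i) := by
  induction i with
  | zero => assumption
  | succ i ih => rw [chainKernel]; infer_instance

lemma chainKernel_succ_comp (κ₀ : Kernel E E) (P : ℕ → Kernel E E) (i : ℕ) (μ : Measure E) :
    P i ∘ₘ (chainKernel κ₀ P i ∘ₘ μ) = chainKernel κ₀ P (i + 1) ∘ₘ μ :=
  Measure.comp_assoc

lemma chainKernel_comp_eq {μ : Measure E} {ν : ℕ → Measure E} (h₀ : κ₀ ∘ₘ μ = ν 0)
    (hP : ∀ i, P i ∘ₘ ν i = ν (i + 1)) (i : ℕ) : chainKernel κ₀ P i ∘ₘ μ = ν i := by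
  induction i with
  | zero => exact h₀
  | succ i ih => rw [← chainKernel_succ_comp, ih, hP]

lemma chainKernel_apply_eq_zero {S : ℕ → Set E} (hS : ∀ i, MeasurableSet (S i))
    (h₀ : ∀ x, κ₀ x (S 0) = 0) (hP : ∀ i x, P i x (S (i + 1)) = 0) (i : ℕ) (x : E) :
    chainKernel κ₀ P i x (S i) = 0 := by
  cases i with
  | zero => exact h₀ x
  | succ i =>
    rw [chainKernel, Kernel.comp_apply]
    exact comp_apply_eq_zero _ (hS _) (hP i)

end Measurable

variable {E : Type*} [MetricSpace E] [SecondCountableTopology E] [MeasurableSpace E]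
  [OpensMeasurableSpace E] {p : ℝ} {κ₀ : Kernel E E} [IsMarkovKernel κ₀] {P : ℕ → Kernel E E}
  [∀ i, IsMarkovKernel (P i)] {S : ℕ → Finset E}

lemma Wp_chainKernel_comp_le (hp : 1 ≤ p) (ρ μ : Measure E) [IsFiniteMeasure ρ]
    [IsFiniteMeasure μ] (h₀ : ∀ x, κ₀ x (S 0 : Set E)ᶜ = 0)
    (hP : ∀ i x, P i x (S (i + 1) : Set E)ᶜ = 0) {J : ℕ}
    (hJ : chainKernel κ₀ P J ∘ₘ ρ = chainKernel κ₀ P J ∘ₘ μ) :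
    Wp p (κ₀ ∘ₘ ρ) (κ₀ ∘ₘ μ) ≤ ∑ i ∈ Finset.range J, 2 * discrepancy (transportCost p (P i)) (S i)
      (chainKernel κ₀ P i ∘ₘ ρ) (chainKernel κ₀ P i ∘ₘ μ) ^ (1 / p) := by
  have hnull (ν : Measure E) (i : ℕ) : (chainKernel κ₀ P i ∘ₘ ν) (S i : Set E)ᶜ = 0 :=
    comp_apply_eq_zero ν (S i).measurableSet.compl
      (chainKernel_apply_eq_zero (fun i => (S i).measurableSet.compl) h₀ hP i)
  have h := Wp_le_sum_massExcess hp (a := fun i => chainKernel κ₀ P i ∘ₘ ρ)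
    (b := fun i => chainKernel κ₀ P i ∘ₘ μ) (fun i => chainKernel_succ_comp κ₀ P i ρ)
    (fun i => chainKernel_succ_comp κ₀ P i μ) (fun i => (S (i + 1)).countable_toSet) hP hJ
  refine h.trans (Finset.sum_le_sum fun i _ => ?_)
  rw [two_mul]
  gcongr
  · exact lintegral_massExcess_le_discrepancy _ _ (hnull ρ i)
  · rw [discrepancy_comm]
    exact lintegral_massExcess_le_discrepancy _ _ (hnull μ i)

lemma Wp_le_transportCost_add_sum_discrepancy (hp : 1 ≤ p) (ρ μ : Measure E)
    [IsProbabilityMeasure ρ] [IsProbabilityMeasure μ] (h₀ : ∀ x, κ₀ x (S 0 : Set E)ᶜ = 0)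
    (hP : ∀ i x, P i x (S (i + 1) : Set E)ᶜ = 0) {J : ℕ} {z : E} (hJ : S J = {z}) :
    Wp p ρ μ ≤ (∫⁻ x, transportCost p κ₀ x ∂ρ) ^ (1 / p) +
      ((∫⁻ x, transportCost p κ₀ x ∂μ) ^ (1 / p) +
        ∑ i ∈ Finset.range J, 2 * discrepancy (transportCost p (P i)) (S i)
          (chainKernel κ₀ P i ∘ₘ ρ) (chainKernel κ₀ P i ∘ₘ μ) ^ (1 / p)) := by
  have hdirac (ν : Measure E) [IsProbabilityMeasure ν] :
      chainKernel κ₀ P J ∘ₘ ν = Measure.dirac z :=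
    comp_eq_dirac ν fun x => by
      simpa [hJ] using
        chainKernel_apply_eq_zero (fun i => (S i).measurableSet.compl) h₀ hP J x
  rw [← add_assoc]
  refine (Wp_le_comp_comp hp ρ μ κ₀ (S 0).countable_toSet h₀).trans ?_
  gcongr
  exact Wp_chainKernel_comp_le hp ρ μ h₀ hP ((hdirac ρ).trans (hdirac μ).symm)

lemma expWpPow_le_chainKernel (hp : 1 ≤ p) (μ : Measure E) [IsProbabilityMeasure μ] {n : ℕ}
    (hn : n ≠ 0) (h₀ : ∀ x, κ₀ x (S 0 : Set E)ᶜ = 0)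
    (hP : ∀ i x, P i x (S (i + 1) : Set E)ᶜ = 0) {J : ℕ} {z : E} (hJ : S J = {z}) {N : ℕ → ℝ}
    (hN : ∀ i, 0 < N i) (hSN : ∀ i, ∀ z ∈ S i, (N i)⁻¹ ≤ (chainKernel κ₀ P i ∘ₘ μ).real {z}) :
    expWpPow p μ n ≤ 2 * (∫⁻ x, transportCost p κ₀ x ∂μ) ^ (1 / p) +
      ∑ i ∈ Finset.range J, 2 * (ENNReal.ofReal √(N i / n) *
        ∫⁻ x, transportCost p (P i) x ∂(chainKernel κ₀ P i ∘ₘ μ)) ^ (1 / p) := by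
  have hp0 : 0 < p := zero_lt_one.trans_le hp
  let cost (X : Fin n → E) : ℝ≥0∞ := ∫⁻ x, transportCost p κ₀ x ∂empiricalMeasure n X
  let disc (i : ℕ) (X : Fin n → E) : ℝ≥0∞ := discrepancy (transportCost p (P i)) (S i)
    (chainKernel κ₀ P i ∘ₘ empiricalMeasure n X) (chainKernel κ₀ P i ∘ₘ μ)
  have hκ₀ : Measurable (transportCost p κ₀) := measurable_transportCost p κ₀
  have hcost : Measurable cost := by
    simp only [cost, lintegral_empiricalMeasure _ hκ₀]
    fun_prop
  have hdisc (i : ℕ) : Measurable (disc i) :=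
    measurable_discrepancy_comp_empiricalMeasure _ (S i) (chainKernel κ₀ P i) _
  let C₀ : ℝ≥0∞ := ∫⁻ x, transportCost p κ₀ x ∂μ
  calc expWpPow p μ n
      ≤ (∫⁻ X, (cost X ^ (1 / p) + (C₀ ^ (1 / p) +
          ∑ i ∈ Finset.range J, 2 * disc i X ^ (1 / p))) ^ p ∂sampleMeasure μ n) ^ (1 / p) := by
        unfold expWpPow
        gcongr with X
        have := isProbabilityMeasure_empiricalMeasure hn X
        exact Wp_le_transportCost_add_sum_discrepancy hp _ μ h₀ hP hJ
    _ ≤ (∫⁻ X, (cost X ^ (1 / p)) ^ p ∂sampleMeasure μ n) ^ (1 / p) +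
        (∫⁻ X, (C₀ ^ (1 / p) + ∑ i ∈ Finset.range J, 2 * disc i X ^ (1 / p)) ^ p
          ∂sampleMeasure μ n) ^ (1 / p) :=
        ENNReal.lintegral_Lp_add_le (by fun_prop) (by fun_prop) hp
    _ ≤ C₀ ^ (1 / p) + (C₀ ^ (1 / p) + ∑ i ∈ Finset.range J,
          2 * (∫⁻ X, disc i X ∂sampleMeasure μ n) ^ (1 / p)) := by
        gcongr
        · simp only [one_div, ENNReal.rpow_inv_rpow hp0.ne']
          exact (lintegral_lintegral_empiricalMeasure hn μ hκ₀).le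
        · exact lintegral_const_add_sum_rpow_le _ hp _ _ _ hdisc
    _ ≤ _ := by
        rw [two_mul, add_assoc]
        gcongr with i
        exact lintegral_discrepancy_comp_empiricalMeasure_le hn μ _ _ (hN i) (hSN i)

end KernelChain

section Quantizers

open ProbabilityTheory

variable {E : Type*} [MetricSpace E] [SecondCountableTopology E] [MeasurableSpace E]
  [OpensMeasurableSpace E] {p : ℝ}

lemma expWpPow_le_of_Wp_lt (hp : 1 ≤ p) (μ : Measure E) [IsProbabilityMeasure μ] {n : ℕ}
    (hn : n ≠ 0) {ν : ℕ → Measure E} [∀ i, IsProbabilityMeasure (ν i)] {S : ℕ → Finset E}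
    (hν : ∀ i, ν i (S i : Set E)ᶜ = 0) {J : ℕ} {z : E} (hJ : S J = {z}) {N : ℕ → ℝ}
    (hN : ∀ i, 0 < N i) (hνN : ∀ i, ∀ x ∈ S i, (N i)⁻¹ ≤ (ν i).real {x}) {B : ℕ → ℝ≥0∞}
    (hB : ∀ i, Wp p μ (ν i) < B i) :
    expWpPow p μ n ≤ 2 * B 0 +
      ∑ i ∈ Finset.range J, 2 * (ENNReal.ofReal √(N i / n) ^ (1 / p) * (B i + B (i + 1))) := by
  have hS (i : ℕ) : (S i : Set E).Nonempty := by
    by_contra! h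
    simpa [h] using hν i
  have hstep (i : ℕ) : Wp p (ν i) (ν (i + 1)) < B i + B (i + 1) := by
    refine (Wp_triangle_of_right_countable hp (ν i) μ (S (i + 1)).countable_toSet (hS _)
      (hν _)).trans_lt (ENNReal.add_lt_add ?_ (hB _))
    exact Wp_comm p μ (ν i) ▸ hB i
  obtain ⟨κ₀, _, h₀, h₀ν, h₀B⟩ :=
    exists_kernel_of_Wp_lt (S 0).countable_toSet (hS 0) (hν 0) (hB 0)
  choose P _ hP hPν hPB using fun i =>
    exists_kernel_of_Wp_lt (S (i + 1)).countable_toSet (hS _) (hν _) (hstep i)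
  have hchain := chainKernel_comp_eq h₀ν hPν
  refine (expWpPow_le_chainKernel hp μ hn h₀ hP hJ hN fun i => (hchain i).symm ▸ hνN i).trans ?_
  simp only [hchain]
  gcongr with i
  rw [ENNReal.mul_rpow_of_nonneg _ _ (by positivity)]
  gcongr
  exact hPB i

lemma expWpPow_le_of_unifQuantErr_lt (hp : 1 ≤ p) (μ : Measure E) [IsProbabilityMeasure μ] {n : ℕ}
    (hn : n ≠ 0) {N : ℕ → ℕ} (hN : ∀ i, N i ≠ 0) {J : ℕ} (hJ : N J = 1) {B : ℕ → ℝ≥0∞}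
    (hB : ∀ i, unifQuantErr p (N i) μ < B i) :
    expWpPow p μ n ≤ 2 * B 0 +
      ∑ i ∈ Finset.range J, 2 * (ENNReal.ofReal √(N i / n) ^ (1 / p) * (B i + B (i + 1))) := by
  classical
  choose x hx using fun i => iInf_lt_iff.1 (hB i)
  have := fun i => isProbabilityMeasure_empiricalMeasure (hN i) (x i)
  have hsingle : ∃ z, Finset.univ.image (x J) = {z} := by
    have : Unique (Fin (N J)) := hJ ▸ inferInstance
    exact ⟨x J default, by simp⟩
  obtain ⟨z, hz⟩ := hsingle
  refine expWpPow_le_of_Wp_lt hp μ hn (S := fun i => Finset.univ.image (x i))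
    (fun i => empiricalMeasure_compl_image (x i)) hz
    (fun i => Nat.cast_pos.2 (Nat.pos_of_ne_zero (hN i))) (fun i y hy => ?_) hx
  obtain ⟨j, -, rfl⟩ := Finset.mem_image.1 hy
  exact inv_le_empiricalMeasure_real_singleton (x i) j

end Quantizers

section Asymptotics

lemma eventually_mul_natLog_add_one_le_rpow (b : ℕ) (K : ℝ) {δ : ℝ} (hδ : 0 < δ) :
    ∀ᶠ n : ℕ in atTop, K * ((Nat.log b n : ℝ) + 1) ≤ (n : ℝ) ^ δ := by
  have hone : (fun _ : ℝ => (1 : ℝ)) =o[atTop] fun x : ℝ => x ^ δ :=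
    (Asymptotics.isLittleO_const_left.2 <| .inr <|
      tendsto_norm_atTop_atTop.comp (tendsto_rpow_atTop hδ))
  have hlog : (fun x : ℝ => |K| * (Real.log x / Real.log b + 1)) =o[atTop] fun x : ℝ => x ^ δ := by
    simp only [div_eq_inv_mul]
    exact (((isLittleO_log_rpow_atTop hδ).const_mul_left _).add hone).const_mul_left _
  filter_upwards [tendsto_natCast_atTop_atTop.eventually (hlog.bound one_pos)] with n hn
  calc K * ((Nat.log b n : ℝ) + 1) ≤ |K| * (Real.log n / Real.log b + 1) := by
        gcongr
        · exact le_abs_self K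
        · exact Real.natLog_le_logb n b
    _ ≤ (n : ℝ) ^ δ := by
        rw [one_mul, Real.norm_of_nonneg (by positivity : 0 ≤ (n : ℝ) ^ δ)] at hn
        exact (Real.le_norm_self _).trans hn

lemma div_rpow_mul_rpow_le {x n θ a : ℝ} (hx : 0 < x) (hxn : x ≤ n) (ha : -θ ≤ a) :
    (x / n) ^ θ * x ^ a ≤ n ^ a := by
  have hn : 0 < n := hx.trans_le hxn
  calc (x / n) ^ θ * x ^ a ≤ (x / n) ^ (-a) * x ^ a :=
        mul_le_mul_of_nonneg_right (Real.rpow_le_rpow_of_exponent_ge (by positivity)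
          ((div_le_one hn).2 hxn) (neg_le.1 ha)) (by positivity)
    _ = n ^ a := by
        rw [Real.div_rpow hx.le hn.le, Real.rpow_neg hx.le, Real.rpow_neg hn.le]
        field_simp

lemma two_mul_div_rpow_mul_rpow_le {x n θ a : ℝ} (hx : 0 < x) (hxn : x ≤ n) (hθ : θ ≤ 1)
    (ha : -θ ≤ a) : (2 * x / n) ^ θ * x ^ a ≤ 2 * n ^ a := by
  have hn : 0 < n := hx.trans_le hxn
  calc (2 * x / n) ^ θ * x ^ a = 2 ^ θ * ((x / n) ^ θ * x ^ a) := by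
        rw [mul_div_assoc, Real.mul_rpow (by norm_num) (by positivity), mul_assoc]
    _ ≤ 2 * n ^ a := by
        gcongr
        · exact (Real.rpow_le_rpow_of_exponent_le (by norm_num) hθ).trans_eq (Real.rpow_one 2)
        · exact div_rpow_mul_rpow_le hx hxn ha

lemma rpow_le_two_mul_rpow {x n θ a : ℝ} (hx : 0 < x) (hxn : x ≤ n) (hnx : n ≤ 2 * x) (hθ : 0 ≤ θ)
    (hθ' : θ ≤ 1) (ha : -θ ≤ a) : x ^ a ≤ 2 * n ^ a :=
  calc x ^ a ≤ (2 * x / n) ^ θ * x ^ a := by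
        refine le_mul_of_one_le_left (by positivity) (Real.one_le_rpow ?_ hθ)
        rwa [one_le_div (hx.trans_le hxn)]
    _ ≤ 2 * n ^ a := two_mul_div_rpow_mul_rpow_le hx hxn hθ' ha

lemma ofReal_sqrt_rpow_mul_add_le {p C a x n : ℝ} (hp : 1 ≤ p) (hC : 0 ≤ C)
    (ha : -(1 / (2 * p)) ≤ a) (hx : 0 < x) (hxn : 2 * x ≤ n) :
    ENNReal.ofReal √(2 * x / n) ^ (1 / p) *
      (ENNReal.ofReal (C * (2 * x) ^ a) + ENNReal.ofReal (C * x ^ a)) ≤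
      ENNReal.ofReal (3 * C * n ^ a) := by
  have hn : 0 < n := by linarith
  have hsqrt : √(2 * x / n) ^ (1 / p) = (2 * x / n) ^ (1 / (2 * p)) := by
    rw [Real.sqrt_eq_rpow, ← Real.rpow_mul (by positivity)]
    congr 1
    ring
  have hθ : 1 / (2 * p) ≤ 1 := by
    rw [div_le_one (by positivity)]
    linarith
  rw [ENNReal.ofReal_rpow_of_nonneg (by positivity) (by positivity), hsqrt,
    ← ENNReal.ofReal_add (by positivity) (by positivity), ← ENNReal.ofReal_mul (by positivity)]
  refine ENNReal.ofReal_le_ofReal ?_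
  calc (2 * x / n) ^ (1 / (2 * p)) * (C * (2 * x) ^ a + C * x ^ a)
      = C * ((2 * x / n) ^ (1 / (2 * p)) * (2 * x) ^ a + (2 * x / n) ^ (1 / (2 * p)) * x ^ a) := by
        ring
    _ ≤ C * (n ^ a + 2 * n ^ a) := by
        refine mul_le_mul_of_nonneg_left (add_le_add ?_ ?_) hC
        · exact div_rpow_mul_rpow_le (by positivity) hxn ha
        · exact two_mul_div_rpow_mul_rpow_le hx (by linarith) hθ ha
    _ = 3 * C * n ^ a := by ring

end Asymptotics

section UpperBound

open ProbabilityTheory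

variable {E : Type*} [MetricSpace E] [SecondCountableTopology E] [MeasurableSpace E]
  [OpensMeasurableSpace E] {p a : ℝ} {μ : Measure E} [IsProbabilityMeasure μ]

lemma expWpPow_le_natLog_mul_rpow (hp : 1 ≤ p) (ha : -(1 / (2 * p)) ≤ a) {C : ℝ}
    (hC : ∀ k : ℕ, k ≠ 0 → unifQuantErr p k μ < ENNReal.ofReal (C * (k : ℝ) ^ a)) {n : ℕ}
    (hn : n ≠ 0) :
    expWpPow p μ n ≤ ENNReal.ofReal (6 * C * ((Nat.log 2 n : ℝ) + 1) * (n : ℝ) ^ a) := by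
  have hC0 : 0 < C := by simpa using pos_of_gt (hC 1 one_ne_zero)
  set J := Nat.log 2 n
  have hJn : (2 : ℝ) ^ J ≤ n := by exact_mod_cast Nat.pow_log_le_self 2 hn
  have hnJ : (n : ℝ) ≤ 2 * 2 ^ J := by
    rw [← pow_succ']
    exact_mod_cast (Nat.lt_pow_succ_log_self one_lt_two n).le
  have hchain := expWpPow_le_of_unifQuantErr_lt hp μ hn (N := fun i => 2 ^ (J - i)) (J := J)
    (fun i => by positivity) (by simp) fun i => hC (2 ^ (J - i)) (by positivity)
  push_cast at hchain
  have hfirst : ENNReal.ofReal (C * ((2 : ℝ) ^ J) ^ a) ≤ ENNReal.ofReal (2 * C * n ^ a) := by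
    have hθ : 1 / (2 * p) ≤ 1 := by
      rw [div_le_one (by positivity)]
      linarith
    have h := rpow_le_two_mul_rpow (by positivity) hJn hnJ (by positivity) hθ ha
    refine ENNReal.ofReal_le_ofReal ?_
    nlinarith
  have hterm (i : ℕ) (hi : i < J) :
      ENNReal.ofReal √(2 ^ (J - i) / n) ^ (1 / p) * (ENNReal.ofReal (C * (2 ^ (J - i)) ^ a) +
        ENNReal.ofReal (C * (2 ^ (J - (i + 1))) ^ a)) ≤ ENNReal.ofReal (3 * C * n ^ a) := by
    rw [show J - i = J - (i + 1) + 1 by omega, pow_succ']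
    refine ofReal_sqrt_rpow_mul_add_le hp hC0.le ha (by positivity) (le_trans ?_ hJn)
    rw [← pow_succ']
    exact pow_le_pow_right₀ one_le_two (by omega)
  calc expWpPow p μ n
      ≤ 2 * ENNReal.ofReal (2 * C * n ^ a) +
          ∑ i ∈ Finset.range J, 2 * ENNReal.ofReal (3 * C * n ^ a) := by
        refine hchain.trans ?_
        refine add_le_add ?_ (Finset.sum_le_sum fun i hi => ?_)
        · exact mul_le_mul_right hfirst 2
        · exact mul_le_mul_right (hterm i (Finset.mem_range.1 hi)) 2
    _ = ENNReal.ofReal (2 * (2 * C * n ^ a) + J * (2 * (3 * C * n ^ a))) := by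
        rw [Finset.sum_const, Finset.card_range, nsmul_eq_mul, ENNReal.ofReal_add (by positivity)
          (by positivity)]
        simp only [ENNReal.ofReal_mul, Nat.ofNat_nonneg, Nat.cast_nonneg, ENNReal.ofReal_ofNat,
          ENNReal.ofReal_natCast]
    _ ≤ _ := by
        refine ENNReal.ofReal_le_ofReal ?_
        have : 0 ≤ C * (n : ℝ) ^ a := by positivity
        linarith

lemma eventually_expWpPow_le_rpow (hp : 1 ≤ p) (ha : -(1 / (2 * p)) ≤ a) {C r : ℝ} (har : a < r)
    (hC : ∀ k : ℕ, k ≠ 0 → unifQuantErr p k μ < ENNReal.ofReal (C * (k : ℝ) ^ a)) :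
    ∀ᶠ n : ℕ in atTop, expWpPow p μ n ≤ ENNReal.ofReal ((n : ℝ) ^ r) := by
  filter_upwards [eventually_mul_natLog_add_one_le_rpow 2 (6 * C) (sub_pos.2 har),
    eventually_ne_atTop 0] with n hlog hn
  refine (expWpPow_le_natLog_mul_rpow hp ha hC hn).trans (ENNReal.ofReal_le_ofReal ?_)
  have hn0 : (0 : ℝ) < n := by positivity
  calc 6 * C * ((Nat.log 2 n : ℝ) + 1) * (n : ℝ) ^ a ≤ (n : ℝ) ^ (r - a) * (n : ℝ) ^ a := by gcongr
    _ = (n : ℝ) ^ r := by rw [← Real.rpow_add hn0, sub_add_cancel]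

lemma Wp_empiricalMeasure_dirac_ne_top (hp : 1 ≤ p) {n : ℕ} (hn : n ≠ 0) (x : Fin n → E) (z : E) :
    Wp p (empiricalMeasure n x) (Measure.dirac z) ≠ ∞ := by
  have := isProbabilityMeasure_empiricalMeasure hn x
  let κ : Kernel E E := .const E (Measure.dirac z)
  have hκ : κ ∘ₘ empiricalMeasure n x = Measure.dirac z := by simp [κ]
  have hcost : ∫⁻ y, transportCost p κ y ∂empiricalMeasure n x ≠ ∞ := by
    rw [lintegral_empiricalMeasure _ (measurable_transportCost p κ)]
    refine ENNReal.mul_ne_top (by simpa) (ENNReal.sum_ne_top.2 fun i _ => ?_)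
    rw [transportCost, Kernel.const_apply, lintegral_dirac' _ (by fun_prop)]
    exact ENNReal.rpow_ne_top_of_nonneg (by positivity) (edist_ne_top _ _)
  refine ne_top_of_le_ne_top (ENNReal.rpow_ne_top_of_nonneg (y := 1 / p) (by positivity) hcost) ?_
  exact hκ ▸ Wp_comp_le hp (empiricalMeasure n x) κ

lemma unifQuantErr_ne_top (hp : 1 ≤ p) {n k : ℕ} (hn : n ≠ 0) (hk : k ≠ 0)
    (h : unifQuantErr p n μ ≠ ∞) : unifQuantErr p k μ ≠ ∞ := by
  obtain ⟨x, hx⟩ := iInf_lt_iff.1 h.lt_top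
  let z : E := x ⟨0, Nat.pos_of_ne_zero hn⟩
  have := isProbabilityMeasure_empiricalMeasure hn x
  have htri : Wp p μ (Measure.dirac z) ≤
      Wp p μ (empiricalMeasure n x) + Wp p (empiricalMeasure n x) (Measure.dirac z) :=
    Wp_triangle_of_right_countable hp _ _ (Set.countable_singleton z) (by simp) (by simp)
  refine ne_top_of_le_ne_top
    (ENNReal.add_ne_top.2 ⟨hx.ne, Wp_empiricalMeasure_dirac_ne_top hp hn x z⟩) (le_trans ?_ htri)
  exact iInf_le_of_le (fun _ => z) (by rw [empiricalMeasure_const hk])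

lemma exists_unifQuantErr_lt_mul_rpow (hp : 1 ≤ p)
    (h : ∀ᶠ n : ℕ in atTop, unifQuantErr p n μ ≤ ENNReal.ofReal ((n : ℝ) ^ a)) :
    ∃ C : ℝ, ∀ k : ℕ, k ≠ 0 → unifQuantErr p k μ < ENNReal.ofReal (C * (k : ℝ) ^ a) := by
  obtain ⟨n, hbn, hn⟩ := (h.and (eventually_ne_atTop 0)).exists
  have hbdd : BddAbove (Set.range fun k : ℕ => (unifQuantErr p k μ).toReal / (k : ℝ) ^ a) := by
    refine IsBoundedUnder.bddAbove_range ⟨1, eventually_map.2 ?_⟩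
    filter_upwards [h] with k hk
    exact div_le_one_of_le₀ (ENNReal.toReal_le_of_le_ofReal (by positivity) hk) (by positivity)
  obtain ⟨C, hC⟩ := hbdd
  refine ⟨C + 1, fun k hk => ?_⟩
  have hpos : 0 < (k : ℝ) ^ a := by positivity
  have hle : (unifQuantErr p k μ).toReal ≤ C * (k : ℝ) ^ a := by
    rw [← div_le_iff₀ hpos]
    exact hC ⟨k, rfl⟩
  have hfin := unifQuantErr_ne_top hp hn hk (ne_top_of_le_ne_top ENNReal.ofReal_ne_top hbn)
  rw [ENNReal.lt_ofReal_iff_toReal_lt hfin]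
  linarith

end UpperBound

section SampleMeanLower

open ProbabilityTheory

lemma exists_eventually_le_lintegral_abs_inv_sqrt_mul {Ω : Type*} [MeasurableSpace Ω]
    {P : Measure Ω} [IsProbabilityMeasure P] {X : ℕ → Ω → ℝ} (hX : MemLp (X 0) 2 P)
    (hindep : iIndepFun X P) (hident : ∀ i, IdentDistrib (X i) (X 0) P P)
    (hvar : Var[X 0; P] ≠ 0) :
    ∃ c : ℝ, 0 < c ∧ ∀ᶠ n : ℕ in atTop, ENNReal.ofReal c ≤
      ∫⁻ ω, ENNReal.ofReal |(√n)⁻¹ * (∑ k ∈ Finset.range n, X k ω - n * P[X 0])| ∂P := by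
  have hclt := tendstoInDistribution_inv_sqrt_mul_sum_sub (Y := id)
    (P' := gaussianReal 0 Var[X 0; P].toNNReal) .id hX hindep hident
  set Z : ℕ → Ω → ℝ := fun n ω => (√n)⁻¹ * (∑ k ∈ Finset.range n, X k ω - n * P[X 0])
  have hZ (n : ℕ) : AEMeasurable (Z n) P := hclt.forall_aemeasurable n
  have hopen := ProbabilityMeasure.le_liminf_measure_open_of_tendsto hclt.tendsto
    (isOpen_Ioi (a := (1 : ℝ)))
  have hpos : gaussianReal 0 Var[X 0; P].toNNReal (Set.Ioi 1) ≠ 0 := by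
    have hv : Var[X 0; P].toNNReal ≠ 0 :=
      (Real.toNNReal_pos.2 ((variance_nonneg _ _).lt_of_ne' hvar)).ne'
    exact fun h => isOpen_Ioi.measure_ne_zero volume Set.nonempty_Ioi
      (gaussianReal_absolutelyContinuous' 0 hv h)
  simp only [ProbabilityMeasure.coe_mk, Measure.map_id] at hopen
  obtain ⟨c, hc, hclt'⟩ := ENNReal.lt_iff_exists_nnreal_btwn.1 (pos_iff_ne_zero.2 hpos)
  refine ⟨c, by exact_mod_cast hc, ?_⟩
  filter_upwards [eventually_lt_of_lt_liminf (hclt'.trans_le hopen)] with n hn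
  rw [Measure.map_apply_of_aemeasurable (hZ n) measurableSet_Ioi] at hn
  calc ENNReal.ofReal c ≤ P (Z n ⁻¹' Set.Ioi 1) := by simpa using hn.le
    _ ≤ P {ω | 1 ≤ ENNReal.ofReal |Z n ω|} := measure_mono fun ω hω => by
        simpa using (Set.mem_Ioi.1 hω).le.trans (le_abs_self _)
    _ ≤ ∫⁻ ω, ENNReal.ofReal |Z n ω| ∂P := by
        simpa using mul_meas_ge_le_lintegral₀ (hZ n).abs.ennreal_ofReal 1

lemma sampleMeasure_eq_map {E Ω : Type*} [MeasurableSpace E] [MeasurableSpace Ω] {μ : Measure E}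
    {P : Measure Ω} [IsProbabilityMeasure P] {X : ℕ → Ω → E} (hX : ∀ i, HasLaw (X i) μ P)
    (hindep : iIndepFun X P) (n : ℕ) :
    sampleMeasure μ n = P.map fun ω (i : Fin n) => X i ω := by
  rw [(iIndepFun_iff_map_fun_eq_pi_map fun i : Fin n => (hX i).aemeasurable).1
    (hindep.precomp Fin.val_injective)]
  simp only [(hX _).map_eq, sampleMeasure]

lemma exists_eventually_le_lintegral_abs_sampleMean_sub {E : Type*} [MeasurableSpace E]
    {μ : Measure E} [IsProbabilityMeasure μ] {f : E → ℝ} (hf : Measurable f) (hL2 : MemLp f 2 μ)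
    (hvar : Var[f; μ] ≠ 0) :
    ∃ c : ℝ, 0 < c ∧ ∀ᶠ n : ℕ in atTop, ENNReal.ofReal (c * (√n)⁻¹) ≤
      ∫⁻ X, ENNReal.ofReal |(n : ℝ)⁻¹ * ∑ i, f (X i) - μ[f]| ∂sampleMeasure μ n := by
  obtain ⟨Ω, _, P, X, hX, hlaw, hindep, _⟩ := exists_iid ℕ μ
  have hmean (i : ℕ) : P[fun ω => f (X i ω)] = μ[f] :=
    (hlaw i).integral_comp hf.aestronglyMeasurable
  have hident (i : ℕ) : IdentDistrib (f ∘ X i) (f ∘ X 0) P P :=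
    ((hlaw i).identDistrib (hlaw 0)).comp hf
  have hvar0 : Var[f ∘ X 0; P] ≠ 0 := by
    rwa [← variance_map hf.aemeasurable (hX 0).aemeasurable, (hlaw 0).map_eq]
  obtain ⟨c, hc, hev⟩ := exists_eventually_le_lintegral_abs_inv_sqrt_mul
    (hL2.comp_measurePreserving ⟨hX 0, (hlaw 0).map_eq⟩) (hindep.comp _ fun _ => hf) hident hvar0
  refine ⟨c, hc, ?_⟩
  filter_upwards [hev, eventually_ne_atTop 0] with n hn hn0
  have hscale (ω : Ω) : ENNReal.ofReal |(n : ℝ)⁻¹ * ∑ i : Fin n, f (X i ω) - μ[f]| =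
      ENNReal.ofReal (√n)⁻¹ *
        ENNReal.ofReal |(√n)⁻¹ * (∑ k ∈ Finset.range n, f (X k ω) - n * μ[f])| := by
    rw [← ENNReal.ofReal_mul (by positivity), ← abs_of_nonneg (by positivity : 0 ≤ (√n : ℝ)⁻¹),
      ← abs_mul, abs_of_nonneg (by positivity : 0 ≤ (√n : ℝ)⁻¹), ← mul_assoc, ← mul_inv,
      Real.mul_self_sqrt (by positivity), Finset.sum_range fun k => f (X k ω), mul_sub,
      inv_mul_cancel_left₀ (by positivity)]
  rw [sampleMeasure_eq_map hlaw hindep, lintegral_map (by fun_prop) (by fun_prop), mul_comm]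
  simp only [hscale]
  rw [lintegral_const_mul' _ _ ofReal_ne_top, ENNReal.ofReal_mul (by positivity)]
  gcongr
  simpa only [Function.comp_apply, hmean] using hn

end SampleMeanLower

section LowerBound

open ProbabilityTheory

variable {E : Type*} [MetricSpace E] [MeasurableSpace E] {p : ℝ}

lemma ofReal_abs_integral_sub_le_Wp (hp : 1 ≤ p) {μ ν : Measure E} [IsProbabilityMeasure μ]
    {f : E → ℝ} (hf : LipschitzWith 1 f) (hfμ : Integrable f μ) (hfν : Integrable f ν) :
    ENNReal.ofReal |∫ x, f x ∂μ - ∫ x, f x ∂ν| ≤ Wp p μ ν := by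
  refine le_iInf₂ ?_
  rintro γ ⟨rfl, rfl⟩
  have : IsProbabilityMeasure γ := Measure.isProbabilityMeasure_of_map Prod.fst
  have hfst : Integrable (fun z : E × E => f z.1) γ := hfμ.comp_measurable measurable_fst
  have hsnd : Integrable (fun z : E × E => f z.2) γ := hfν.comp_measurable measurable_snd
  rw [integral_map (by fun_prop) hfμ.aestronglyMeasurable,
    integral_map (by fun_prop) hfν.aestronglyMeasurable, ← integral_sub hfst hsnd,
    ← Real.enorm_eq_ofReal_abs]
  calc ‖∫ z, (f z.1 - f z.2) ∂γ‖ₑ ≤ eLpNorm' (fun z => f z.1 - f z.2) 1 γ := by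
        simpa [eLpNorm'] using enorm_integral_le_lintegral_enorm fun z : E × E => f z.1 - f z.2
    _ ≤ eLpNorm' (fun z => f z.1 - f z.2) p γ :=
        eLpNorm'_le_eLpNorm'_of_exponent_le one_pos hp γ (hfst.sub hsnd).aestronglyMeasurable
    _ ≤ (∫⁻ z, edist z.1 z.2 ^ p ∂γ) ^ (1 / p) := by
        rw [eLpNorm']
        gcongr with z
        simpa [← edist_eq_enorm_sub] using hf z.1 z.2

lemma exists_lipschitzWith_variance_ne_zero [SecondCountableTopology E] [OpensMeasurableSpace E]
    {μ : Measure E} [IsProbabilityMeasure μ] (hμ : ∀ x, μ ≠ Measure.dirac x) :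
    ∃ f : E → ℝ, LipschitzWith 1 f ∧ (∀ x, f x ∈ Set.Icc 0 1) ∧ Var[f; μ] ≠ 0 := by
  obtain ⟨z, hz⟩ := Measure.nonempty_support (IsProbabilityMeasure.ne_zero μ)
  rw [Measure.mem_support_iff_forall] at hz
  let f : E → ℝ := fun x => min (dist x z) 1
  have hf : LipschitzWith 1 f := (LipschitzWith.dist_left z).min_const 1
  have h01 (x : E) : f x ∈ Set.Icc 0 1 := ⟨le_min dist_nonneg zero_le_one, min_le_right _ _⟩
  refine ⟨f, hf, h01, fun hvar => hμ z ?_⟩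
  have hconst : ∀ᵐ x ∂μ, f x = μ[f] := ae_eq_integral_of_variance_eq_zero
    (memLp_of_bounded (.of_forall h01) hf.continuous.aestronglyMeasurable 2) hvar
  have hmean : μ[f] ≤ 0 := by
    refine le_of_forall_pos_lt_add fun ε hε => ?_
    have hball : ∃ᵐ x ∂μ, x ∈ Metric.ball z ε :=
      frequently_ae_mem_iff.2 (hz _ (Metric.ball_mem_nhds z hε)).ne'
    obtain ⟨x, hx, hfx⟩ := (hball.and_eventually hconst).exists
    rw [← hfx, zero_add]
    exact (min_le_left _ _).trans_lt (Metric.mem_ball.1 hx)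
  have hid : id =ᵐ[μ] fun _ => z := by
    filter_upwards [hconst] with x hx
    refine dist_le_zero.1 ?_
    by_contra! hpos
    exact (lt_min hpos one_pos).not_ge (hx.trans_le hmean)
  simpa using (hasLaw_dirac_of_ae_eq hid).map_eq

lemma unifQuantErr_le_expWpPow (hp : 0 < p) (μ : Measure E) [IsProbabilityMeasure μ] (n : ℕ) :
    unifQuantErr p n μ ≤ expWpPow p μ n := by
  rw [expWpPow, one_div, ENNReal.le_rpow_inv_iff hp]
  calc unifQuantErr p n μ ^ p = ∫⁻ _, unifQuantErr p n μ ^ p ∂sampleMeasure μ n := by simp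
    _ ≤ ∫⁻ X, Wp p (empiricalMeasure n X) μ ^ p ∂sampleMeasure μ n := by
        gcongr with X
        exact (iInf_le _ X).trans_eq (Wp_comm p μ _)

lemma exists_eventually_le_expWpPow [SecondCountableTopology E] [OpensMeasurableSpace E]
    (hp : 1 ≤ p) {μ : Measure E} [IsProbabilityMeasure μ] (hμ : ∀ x, μ ≠ Measure.dirac x) :
    ∃ c : ℝ, 0 < c ∧ ∀ᶠ n : ℕ in atTop, ENNReal.ofReal (c * (√n)⁻¹) ≤ expWpPow p μ n := by
  obtain ⟨f, hf, h01, hvar⟩ := exists_lipschitzWith_variance_ne_zero hμ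
  have hfm : Measurable f := hf.continuous.measurable
  have hL2 (ν : Measure E) [IsFiniteMeasure ν] : MemLp f 2 ν :=
    memLp_of_bounded (.of_forall h01) hfm.aestronglyMeasurable 2
  obtain ⟨c, hc, hev⟩ := exists_eventually_le_lintegral_abs_sampleMean_sub hfm (hL2 μ) hvar
  refine ⟨c, hc, ?_⟩
  filter_upwards [hev, eventually_ne_atTop 0] with n hn hn0
  have hWp (X : Fin n → E) :
      ENNReal.ofReal |(n : ℝ)⁻¹ * ∑ i, f (X i) - μ[f]| ≤ Wp p (empiricalMeasure n X) μ := by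
    have := isProbabilityMeasure_empiricalMeasure hn0 X
    rw [← integral_empiricalMeasure X hfm]
    exact ofReal_abs_integral_sub_le_Wp hp hf ((hL2 _).integrable one_le_two)
      ((hL2 _).integrable one_le_two)
  have hmeas : Measurable fun X : Fin n → E => (n : ℝ)⁻¹ * ∑ i, f (X i) - μ[f] := by fun_prop
  calc ENNReal.ofReal (c * (√n)⁻¹)
      ≤ ∫⁻ X, ENNReal.ofReal |(n : ℝ)⁻¹ * ∑ i, f (X i) - μ[f]| ∂sampleMeasure μ n := hn
    _ ≤ (∫⁻ X, ENNReal.ofReal |(n : ℝ)⁻¹ * ∑ i, f (X i) - μ[f]| ^ p ∂sampleMeasure μ n) ^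
          (1 / p) := by
        simpa [eLpNorm', Real.enorm_eq_ofReal_abs] using eLpNorm'_le_eLpNorm'_of_exponent_le one_pos
          hp (sampleMeasure μ n) hmeas.aestronglyMeasurable
    _ ≤ expWpPow p μ n := by
        rw [expWpPow]
        gcongr with X
        exact hWp X

end LowerBound

section GrowthExponent

/-- The polynomial growth exponent `limsup ln (u n) / ln n` of a sequence `u`, in the extended
sense: the infimum of the exponents `a` with `u n ≤ n ^ a` eventually. -/
noncomputable def growthExponent (u : ℕ → ℝ≥0∞) : EReal :=
  limsup (fun n : ℕ => ENNReal.log (u n) * (((Real.log n)⁻¹ : ℝ) : EReal)) atTop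

variable {u v : ℕ → ℝ≥0∞} {a c : ℝ}

lemma log_ofReal_natCast_rpow {n : ℕ} (hn : n ≠ 0) (a : ℝ) :
    ENNReal.log (ENNReal.ofReal ((n : ℝ) ^ a)) = a * (Real.log n : EReal) := by
  rw [ENNReal.log_ofReal_of_pos (by positivity), Real.log_rpow (by positivity), EReal.coe_mul]

lemma log_mul_inv_log_le_iff {n : ℕ} (hn : 1 < n) (x : ℝ≥0∞) (a : ℝ) :
    ENNReal.log x * (((Real.log n)⁻¹ : ℝ) : EReal) ≤ a ↔ x ≤ ENNReal.ofReal ((n : ℝ) ^ a) := by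
  have hlog : 0 < Real.log n := Real.log_pos (by exact_mod_cast hn)
  rw [EReal.coe_inv, ← div_eq_mul_inv, EReal.div_le_iff_le_mul (by exact_mod_cast hlog)
    (EReal.coe_ne_top _), mul_comm, ← log_ofReal_natCast_rpow (by lia), ENNReal.log_le_log_iff]

lemma le_log_mul_inv_log_iff {n : ℕ} (hn : 1 < n) (x : ℝ≥0∞) (a : ℝ) :
    (a : EReal) ≤ ENNReal.log x * (((Real.log n)⁻¹ : ℝ) : EReal) ↔
      ENNReal.ofReal ((n : ℝ) ^ a) ≤ x := by
  have hlog : 0 < Real.log n := Real.log_pos (by exact_mod_cast hn)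
  rw [EReal.coe_inv, ← div_eq_mul_inv, EReal.le_div_iff_mul_le (by exact_mod_cast hlog)
    (EReal.coe_ne_top _), ← log_ofReal_natCast_rpow (by lia), ENNReal.log_le_log_iff]

lemma growthExponent_mono (h : u ≤ v) : growthExponent u ≤ growthExponent v := by
  refine limsup_le_limsup (.of_forall fun n => ?_)
  have hlog : (0 : EReal) ≤ ((Real.log n)⁻¹ : ℝ) :=
    EReal.coe_nonneg.2 (inv_nonneg.2 (Real.log_natCast_nonneg n))
  exact mul_le_mul_of_nonneg_right (ENNReal.log_le_log (h n)) hlog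

lemma growthExponent_le (h : ∀ᶠ n : ℕ in atTop, u n ≤ ENNReal.ofReal ((n : ℝ) ^ a)) :
    growthExponent u ≤ a := by
  refine limsup_le_of_le (by isBoundedDefault) ?_
  filter_upwards [h, eventually_gt_atTop 1] with n hn hn1
  exact (log_mul_inv_log_le_iff hn1 _ _).2 hn

lemma eventually_le_rpow_of_growthExponent_lt (h : growthExponent u < a) :
    ∀ᶠ n : ℕ in atTop, u n ≤ ENNReal.ofReal ((n : ℝ) ^ a) := by
  filter_upwards [eventually_lt_of_limsup_lt h, eventually_gt_atTop 1] with n hn hn1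
  exact (log_mul_inv_log_le_iff hn1 _ _).1 hn.le

lemma le_growthExponent (hc : 0 < c)
    (h : ∀ᶠ n : ℕ in atTop, ENNReal.ofReal (c * (n : ℝ) ^ a) ≤ u n) :
    (a : EReal) ≤ growthExponent u := by
  refine EReal.ge_of_forall_gt_iff_ge.1 fun b hb => ?_
  have hpow : Tendsto (fun n : ℕ => (n : ℝ) ^ (a - b)) atTop atTop :=
    (tendsto_rpow_atTop (sub_pos.2 (EReal.coe_lt_coe_iff.1 hb))).comp tendsto_natCast_atTop_atTop
  refine le_limsup_of_frequently_le' (Eventually.frequently ?_)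
  filter_upwards [hpow.eventually_ge_atTop c⁻¹, h, eventually_gt_atTop 1] with n hn hu hn1
  rw [le_log_mul_inv_log_iff hn1]
  refine (ENNReal.ofReal_le_ofReal ?_).trans hu
  rw [Real.rpow_sub (by positivity), inv_le_iff_one_le_mul₀' hc, mul_div_assoc',
    one_le_div (by positivity)] at hn
  exact hn

end GrowthExponent

section Rates

variable {E : Type*} [MetricSpace E] [SecondCountableTopology E] [MeasurableSpace E]
  [OpensMeasurableSpace E] {p : ℝ}

lemma neg_half_le_growthExponent_expWpPow (hp : 1 ≤ p) {μ : Measure E} [IsProbabilityMeasure μ]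
    (hμ : ∀ x, μ ≠ Measure.dirac x) :
    ((-(1 / 2) : ℝ) : EReal) ≤ growthExponent (expWpPow p μ) := by
  obtain ⟨c, hc, hlower⟩ := exists_eventually_le_expWpPow hp hμ
  refine le_growthExponent hc ?_
  filter_upwards [hlower] with n hn
  rwa [Real.rpow_neg (by positivity), ← Real.sqrt_eq_rpow]

lemma growthExponent_expWpPow_le_max (hp : 1 ≤ p) (μ : Measure E) [IsProbabilityMeasure μ] :
    growthExponent (expWpPow p μ) ≤
      max ((-(1 / (2 * p)) : ℝ) : EReal) (growthExponent fun n => unifQuantErr p n μ) := by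
  refine EReal.le_of_forall_lt_iff_le.1 fun r hr => ?_
  obtain ⟨a, ha, har⟩ := EReal.lt_iff_exists_real_btwn.1 hr
  obtain ⟨hpa, hqa⟩ := max_lt_iff.1 ha
  obtain ⟨C, hC⟩ := exists_unifQuantErr_lt_mul_rpow hp (eventually_le_rpow_of_growthExponent_lt hqa)
  exact growthExponent_le (eventually_expWpPow_le_rpow hp (EReal.coe_le_coe_iff.1 hpa.le)
    (EReal.coe_lt_coe_iff.1 har) hC)

end Rates

theorem stmt_3_general {E : Type*} [MetricSpace E] [SecondCountableTopology E] [MeasurableSpace E]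
    [OpensMeasurableSpace E] {p : ℝ} (hp : 1 ≤ p) (μ : Measure E) [IsProbabilityMeasure μ]
    (hμ : ∀ x : E, μ ≠ Measure.dirac x) :
    max ((-(1 / 2) : ℝ) : EReal) (growthExponent fun n => unifQuantErr p n μ) ≤
        growthExponent (expWpPow p μ) ∧
      growthExponent (expWpPow p μ) ≤
        max ((-(1 / (2 * p)) : ℝ) : EReal) (growthExponent fun n => unifQuantErr p n μ) :=
  ⟨max_le (neg_half_le_growthExponent_expWpPow hp hμ)
      (growthExponent_mono (unifQuantErr_le_expWpPow (by positivity) μ)),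
    growthExponent_expWpPow_le_max hp μ⟩

/-- **Corollary (main2corollary, part 1).** Let `(E, d_E)` be a separable metric
space, `p ≥ 1` and `μ ∈ 𝒫_p(E)` not a Dirac measure. Then
`max(−1/2, limsup ln b_{n,p}(μ)/ln n) ≤ limsup ln((𝔼[W_p(μ_n,μ)^p])^{1/p})/ln n
 ≤ max(−1/(2p), limsup ln b_{n,p}(μ)/ln n)`.
The logarithms are taken in the extended sense (`ENNReal.log`, with values in `EReal`,
so that `ln 0 = −∞`), and `ln x / ln n` is rendered as `ln x · (ln n)⁻¹`. -/
theorem stmt_3 {E : Type*} [MetricSpace E] [TopologicalSpace.SeparableSpace E]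
    [MeasurableSpace E] [BorelSpace E]
    (p : ℝ) (hp : 1 ≤ p)
    (μ : Measure E) [IsProbabilityMeasure μ] (hμ : HasFiniteMoment p μ)
    (hnotdirac : ∀ x : E, μ ≠ Measure.dirac x) :
    max ((- (1 / 2) : ℝ) : EReal)
        (Filter.limsup
          (fun n : ℕ => ENNReal.log (unifQuantErr p n μ) * (((Real.log n)⁻¹ : ℝ) : EReal))
          Filter.atTop)
      ≤ Filter.limsup
          (fun n : ℕ => ENNReal.log (expWpPow p μ n) * (((Real.log n)⁻¹ : ℝ) : EReal))
          Filter.atTop ∧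
    Filter.limsup
        (fun n : ℕ => ENNReal.log (expWpPow p μ n) * (((Real.log n)⁻¹ : ℝ) : EReal))
        Filter.atTop
      ≤ max ((- (1 / (2 * p)) : ℝ) : EReal)
          (Filter.limsup
            (fun n : ℕ => ENNReal.log (unifQuantErr p n μ) * (((Real.log n)⁻¹ : ℝ) : EReal))
            Filter.atTop) := by
  have := UniformSpace.secondCountable_of_separable E
  exact stmt_3_general hp μ hnotdirac
end
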